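/- arXiv:1006.3501 — 4 statements merged into one kernel-verified Lean document; each statement's English description precedes it below -/
import Mathlib

section
/- Let C be a spherical fusion category over a commutative ring k. Then the center Z(C), equipped with its braiding and its pivotal structure, is a ribbon category: for every half braiding (A,σ) of C, the dual morphism (θ_{(A,σ)})* : A* → A* (dual taken in C) of the twist θ_{(A,σ)} = (id_A ⊗ ev_r(A))(σ_A ⊗ id_{A*})(id_A ⊗ coev_l(A)) : A → A equals the twist θ_{(A,σ)*} of the dual half braiding (A,σ)* = (A*, σ^∨). -/
open CategoryTheory CategoryTheory.Limits MonoidalCategory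

universe v u w

/-- A pivotal category: a monoidal category in which every object is equipped with a dual
object and with evaluation/coevaluation morphisms forming a left duality and a right
duality, such that left and right duals of morphisms coincide, the left and right
monoidal constraints coincide, and the left and right evaluations of the unit coincide. -/
class PivotalCat (C : Type u) [Category.{v} C] [MonoidalCategory C] where
  dual : C → C
  evl : ∀ X : C, dual X ⊗ X ⟶ 𝟙_ C
  coevl : ∀ X : C, 𝟙_ C ⟶ X ⊗ dual X
  evr : ∀ X : C, X ⊗ dual X ⟶ 𝟙_ C
  coevr : ∀ X : C, 𝟙_ C ⟶ dual X ⊗ X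
  left_zigzag₁ : ∀ X : C,
    (λ_ X).inv ≫ (coevl X ▷ X) ≫ (α_ X (dual X) X).hom ≫ (X ◁ evl X) ≫ (ρ_ X).hom = 𝟙 X
  left_zigzag₂ : ∀ X : C,
    (ρ_ (dual X)).inv ≫ (dual X ◁ coevl X) ≫ (α_ (dual X) X (dual X)).inv ≫
      (evl X ▷ dual X) ≫ (λ_ (dual X)).hom = 𝟙 (dual X)
  right_zigzag₁ : ∀ X : C,
    (ρ_ X).inv ≫ (X ◁ coevr X) ≫ (α_ X (dual X) X).inv ≫ (evr X ▷ X) ≫ (λ_ X).hom = 𝟙 X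
  right_zigzag₂ : ∀ X : C,
    (λ_ (dual X)).inv ≫ (coevr X ▷ dual X) ≫ (α_ (dual X) X (dual X)).hom ≫
      (dual X ◁ evr X) ≫ (ρ_ (dual X)).hom = 𝟙 (dual X)
  ldual_eq_rdual : ∀ {X Y : C} (f : X ⟶ Y),
    (ρ_ (dual Y)).inv ≫ (dual Y ◁ coevl X) ≫ (dual Y ◁ (f ▷ dual X)) ≫
      (α_ (dual Y) Y (dual X)).inv ≫ (evl Y ▷ dual X) ≫ (λ_ (dual X)).hom =
    (λ_ (dual Y)).inv ≫ (coevr X ▷ dual Y) ≫ ((dual X ◁ f) ▷ dual Y) ≫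
      (α_ (dual X) Y (dual Y)).hom ≫ (dual X ◁ evr Y) ≫ (ρ_ (dual X)).hom
  constraint_eq : ∀ X Y : C,
    (ρ_ (dual X ⊗ dual Y)).inv ≫ ((dual X ⊗ dual Y) ◁ coevl (Y ⊗ X)) ≫
      (α_ (dual X) (dual Y) ((Y ⊗ X) ⊗ dual (Y ⊗ X))).hom ≫
      (dual X ◁ (α_ (dual Y) (Y ⊗ X) (dual (Y ⊗ X))).inv) ≫
      (dual X ◁ (((α_ (dual Y) Y X).inv ≫ (evl Y ▷ X) ≫ (λ_ X).hom) ▷ dual (Y ⊗ X))) ≫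
      (α_ (dual X) X (dual (Y ⊗ X))).inv ≫ (evl X ▷ dual (Y ⊗ X)) ≫ (λ_ (dual (Y ⊗ X))).hom =
    (λ_ (dual X ⊗ dual Y)).inv ≫ (coevr (Y ⊗ X) ▷ (dual X ⊗ dual Y)) ≫
      (α_ (dual (Y ⊗ X)) (Y ⊗ X) (dual X ⊗ dual Y)).hom ≫
      (dual (Y ⊗ X) ◁ ((α_ Y X (dual X ⊗ dual Y)).hom ≫ (Y ◁ (α_ X (dual X) (dual Y)).inv) ≫
        (Y ◁ (evr X ▷ dual Y)) ≫ (Y ◁ (λ_ (dual Y)).hom) ≫ evr Y)) ≫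
      (ρ_ (dual (Y ⊗ X))).hom
  ev_unit : (ρ_ (dual (𝟙_ C))).inv ≫ evl (𝟙_ C) = (λ_ (dual (𝟙_ C))).inv ≫ evr (𝟙_ C)

namespace PivotalCat

variable {C : Type u} [Category.{v} C] [MonoidalCategory C] [PivotalCat C]

/-- The (common left = right) dual of a morphism. -/
def pdual {X Y : C} (f : X ⟶ Y) : dual Y ⟶ dual X :=
  (ρ_ (dual Y)).inv ≫ (dual Y ◁ coevl X) ≫ (dual Y ◁ (f ▷ dual X)) ≫
    (α_ (dual Y) Y (dual X)).inv ≫ (evl Y ▷ dual X) ≫ (λ_ (dual X)).hom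

/-- The (common left = right) pivotal monoidal constraint `X* ⊗ Y* ⟶ (Y ⊗ X)*`. -/
def mcon (X Y : C) : dual X ⊗ dual Y ⟶ dual (Y ⊗ X) :=
  (ρ_ (dual X ⊗ dual Y)).inv ≫ ((dual X ⊗ dual Y) ◁ coevl (Y ⊗ X)) ≫
    (α_ (dual X) (dual Y) ((Y ⊗ X) ⊗ dual (Y ⊗ X))).hom ≫
    (dual X ◁ (α_ (dual Y) (Y ⊗ X) (dual (Y ⊗ X))).inv) ≫
    (dual X ◁ (((α_ (dual Y) Y X).inv ≫ (evl Y ▷ X) ≫ (λ_ X).hom) ▷ dual (Y ⊗ X))) ≫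
    (α_ (dual X) X (dual (Y ⊗ X))).inv ≫ (evl X ▷ dual (Y ⊗ X)) ≫ (λ_ (dual (Y ⊗ X))).hom

/-- The left trace of an endomorphism. -/
def trl {X : C} (f : X ⟶ X) : 𝟙_ C ⟶ 𝟙_ C := coevr X ≫ (dual X ◁ f) ≫ evl X

/-- The right trace of an endomorphism. -/
def trr {X : C} (f : X ⟶ X) : 𝟙_ C ⟶ 𝟙_ C := coevl X ≫ (f ▷ dual X) ≫ evr X

/-- The left dimension of an object, as an endomorphism of the unit. -/
def diml (X : C) : 𝟙_ C ⟶ 𝟙_ C := trl (𝟙 X)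

/-- The right dimension of an object, as an endomorphism of the unit. -/
def dimr (X : C) : 𝟙_ C ⟶ 𝟙_ C := trr (𝟙 X)

/-- The permutation map `σ_{X,Y} : Hom(𝟙, X ⊗ Y) → Hom(𝟙, Y ⊗ X)`,
`α ↦ (ev_l X ⊗ id_{Y⊗X}) ∘ (id_{X*} ⊗ α ⊗ id_X) ∘ coev_r X`. -/
def sigmaMap (X Y : C) (a : 𝟙_ C ⟶ X ⊗ Y) : 𝟙_ C ⟶ Y ⊗ X :=
  coevr X ≫ (dual X ◁ (λ_ X).inv) ≫ (dual X ◁ (a ▷ X)) ≫ (dual X ◁ (α_ X Y X).hom) ≫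
    (α_ (dual X) X (Y ⊗ X)).inv ≫ (evl X ▷ (Y ⊗ X)) ≫ (λ_ (Y ⊗ X)).hom

end PivotalCat

/-- A pivotal category is spherical when left and right traces coincide. -/
class SphericalCat (C : Type u) [Category.{v} C] [MonoidalCategory C] [PivotalCat C] : Prop where
  tr_eq : ∀ {X : C} (f : X ⟶ X), PivotalCat.trl f = PivotalCat.trr f
/-- An object `X` of a `k`-linear category is simple if `λ ↦ λ • id_X` is a bijection
`k → End X`. -/
def IsSimpleObj (k : Type w) [CommRing k] {C : Type u} [Category.{v} C]
    [Preadditive C] [CategoryTheory.Linear k C] (X : C) : Prop :=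
  Function.Bijective fun a : k => a • 𝟙 X

/-- A monoidal `k`-category: the hom-sets are `k`-modules, composition and the monoidal
product are `k`-bilinear (all this is encoded in the instance parameters), and
`End(𝟙)` is free of rank one via `λ ↦ λ • id`. -/
class MonoidalKCat (k : Type w) [CommRing k] (C : Type u) [Category.{v} C]
    [Preadditive C] [CategoryTheory.Linear k C] [MonoidalCategory C]
    [MonoidalPreadditive C] [CategoryTheory.MonoidalLinear k C] : Prop where
  unit_free : Function.Bijective fun a : k => a • 𝟙 (𝟙_ C)

/-- The identification `End(𝟙) = k` of a monoidal `k`-category. -/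
noncomputable def toScalar (k : Type w) [CommRing k] {C : Type u} [Category.{v} C]
    [Preadditive C] [CategoryTheory.Linear k C] [MonoidalCategory C]
    [MonoidalPreadditive C] [CategoryTheory.MonoidalLinear k C] [MonoidalKCat k C]
    (f : 𝟙_ C ⟶ 𝟙_ C) : k :=
  (Equiv.ofBijective (fun a : k => a • 𝟙 (𝟙_ C))
    (MonoidalKCat.unit_free (k := k) (C := C))).symm f

/-- The left dimension of an object as an element of `k`. -/
noncomputable def sdiml (k : Type w) [CommRing k] {C : Type u} [Category.{v} C]
    [Preadditive C] [CategoryTheory.Linear k C] [MonoidalCategory C]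
    [MonoidalPreadditive C] [CategoryTheory.MonoidalLinear k C] [PivotalCat C]
    [MonoidalKCat k C] (X : C) : k :=
  toScalar k (PivotalCat.diml X)

/-- The right dimension of an object as an element of `k`. -/
noncomputable def sdimr (k : Type w) [CommRing k] {C : Type u} [Category.{v} C]
    [Preadditive C] [CategoryTheory.Linear k C] [MonoidalCategory C]
    [MonoidalPreadditive C] [CategoryTheory.MonoidalLinear k C] [PivotalCat C]
    [MonoidalKCat k C] (X : C) : k :=
  toScalar k (PivotalCat.dimr X)

/-- A pre-fusion category over `k`: a pivotal `k`-category in which every finite family of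
objects has a direct sum, every object is a finite direct sum of simple objects, and there
are no nonzero morphisms between non-isomorphic simple objects. -/
class PreFusionCat (k : Type w) [CommRing k] (C : Type u) [Category.{v} C]
    [Preadditive C] [CategoryTheory.Linear k C] [MonoidalCategory C]
    [MonoidalPreadditive C] [CategoryTheory.MonoidalLinear k C]
    [CategoryTheory.Limits.HasFiniteBiproducts C] [PivotalCat C] [MonoidalKCat k C] : Prop where
  semisimple : ∀ X : C, ∃ (n : ℕ) (obj : Fin n → C) (p : ∀ a, X ⟶ obj a) (q : ∀ a, obj a ⟶ X),
    (∀ a, IsSimpleObj k (obj a)) ∧ (∑ a, p a ≫ q a = 𝟙 X) ∧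
    (∀ a, q a ≫ p a = 𝟙 (obj a)) ∧ (∀ a b, a ≠ b → q a ≫ p b = 0)
  simple_hom_zero : ∀ {i j : C}, IsSimpleObj k i → IsSimpleObj k j →
    IsEmpty (i ≅ j) → ∀ f : i ⟶ j, f = 0

/-- A fusion category over `k`: a pre-fusion category with finitely many isomorphism
classes of simple objects. -/
class FusionCat (k : Type w) [CommRing k] (C : Type u) [Category.{v} C]
    [Preadditive C] [CategoryTheory.Linear k C] [MonoidalCategory C]
    [MonoidalPreadditive C] [CategoryTheory.MonoidalLinear k C]
    [CategoryTheory.Limits.HasFiniteBiproducts C] [PivotalCat C] [MonoidalKCat k C]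
    [PreFusionCat k C] : Prop where
  finitely_many_simples : ∃ S : Set C, S.Finite ∧
    ∀ i : C, IsSimpleObj k i → ∃ j ∈ S, Nonempty (i ≅ j)

/-- A representative set of simple objects: it contains the unit object, consists of simple
objects, and every simple object is isomorphic to exactly one of its elements. -/
def IsRepresentativeSet (k : Type w) [CommRing k] (C : Type u) [Category.{v} C]
    [Preadditive C] [CategoryTheory.Linear k C] [MonoidalCategory C] (I : Set C) : Prop :=
  (𝟙_ C) ∈ I ∧ (∀ i ∈ I, IsSimpleObj k i) ∧
    ∀ X : C, IsSimpleObj k X → ∃! i, i ∈ I ∧ Nonempty (X ≅ i)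

/-- The dimension of a fusion category with (finite) representative set `I` of simple
objects: `dim C = ∑_{i ∈ I} dim_l(i) · dim_r(i)`. -/
noncomputable def catDim (k : Type w) [CommRing k] {C : Type u} [Category.{v} C]
    [Preadditive C] [CategoryTheory.Linear k C] [MonoidalCategory C]
    [MonoidalPreadditive C] [CategoryTheory.MonoidalLinear k C] [PivotalCat C]
    [MonoidalKCat k C] (I : Finset C) : k :=
  ∑ i ∈ I, sdiml k i * sdimr k i

namespace PivotalCat

variable {C : Type u} [Category.{v} C] [MonoidalCategory C] [PivotalCat C]

/-- The twist `θ = (id_A ⊗ ev_r A) ∘ (s ⊗ id_{A*}) ∘ (id_A ⊗ coev_l A) : A ⟶ A` built from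
a self-braiding `s : A ⊗ A ⟶ A ⊗ A` (the component at `A` of a half braiding of `A`). -/
def twistHom (A : C) (s : A ⊗ A ⟶ A ⊗ A) : A ⟶ A :=
  (ρ_ A).inv ≫ (A ◁ coevl A) ≫ (α_ A A (dual A)).inv ≫ (s ▷ dual A) ≫
    (α_ A A (dual A)).hom ≫ (A ◁ evr A) ≫ (ρ_ A).hom

/-- The component at `X` of the dual half braiding `σ^∨` of a half braiding `σ` of `A`:
`σ^∨_X = (ev_l A ⊗ id_{X ⊗ A*}) ∘ (id_{A*} ⊗ σ_X⁻¹ ⊗ id_{A*}) ∘ (id_{A* ⊗ X} ⊗ coev_l A)`. -/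
def dualBeta (A X : C) (s : A ⊗ X ≅ X ⊗ A) : dual A ⊗ X ⟶ X ⊗ dual A :=
  (ρ_ (dual A ⊗ X)).inv ≫ ((dual A ⊗ X) ◁ coevl A) ≫
    (α_ (dual A) X (A ⊗ dual A)).hom ≫ (dual A ◁ (α_ X A (dual A)).inv) ≫
    (dual A ◁ (s.inv ▷ dual A)) ≫ (dual A ◁ (α_ A X (dual A)).hom) ≫
    (α_ (dual A) A (X ⊗ dual A)).inv ≫ (evl A ▷ (X ⊗ dual A)) ≫ (λ_ (X ⊗ dual A)).hom

end PivotalCat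

namespace PivotalCat
section helpers
variable {C : Type u} [Category.{v} C] [MonoidalCategory C] [PivotalCat C]

lemma coevl_slide {X Y : C} (f : X ⟶ Y) :
    coevl X ≫ f ▷ dual X = coevl Y ≫ Y ◁ pdual f := by
  symm
  unfold pdual
  calc _ = 𝟙 _ ⊗≫ (coevl Y ▷ 𝟙_ C ≫ (Y ⊗ dual Y) ◁ (coevl X ≫ f ▷ dual X)) ⊗≫
        Y ◁ evl Y ▷ dual X ⊗≫ 𝟙 _ := by monoidal
    _ = 𝟙 _ ⊗≫ (coevl X ≫ f ▷ dual X) ⊗≫ ((λ_ Y).inv ≫ (coevl Y ▷ Y) ≫ (α_ Y (dual Y) Y).hom ≫ (Y ◁ evl Y) ≫ (ρ_ Y).hom) ▷ dual X ⊗≫ 𝟙 _ := by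
        rw [← whisker_exchange]; monoidal
    _ = _ := by rw [left_zigzag₁]; monoidal

lemma pdual_eq {X Y : C} (f : X ⟶ Y) : pdual f =
    (λ_ (dual Y)).inv ≫ (coevr X ▷ dual Y) ≫ ((dual X ◁ f) ▷ dual Y) ≫
      (α_ (dual X) Y (dual Y)).hom ≫ (dual X ◁ evr Y) ≫ (ρ_ (dual X)).hom :=
  ldual_eq_rdual f

lemma evr_slide {X Y : C} (f : X ⟶ Y) :
    f ▷ dual Y ≫ evr Y = X ◁ pdual f ≫ evr X := by
  symm
  rw [pdual_eq]
  calc _ = 𝟙 _ ⊗≫ X ◁ coevr X ▷ dual Y ⊗≫ ((X ⊗ dual X) ◁ (f ▷ dual Y ≫ evr Y) ≫ evr X ▷ 𝟙_ C) ⊗≫ 𝟙 _ := by monoidal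
    _ = 𝟙 _ ⊗≫ ((ρ_ X).inv ≫ (X ◁ coevr X) ≫ (α_ X (dual X) X).inv ≫ (evr X ▷ X) ≫ (λ_ X).hom) ▷ dual Y ⊗≫ (f ▷ dual Y ≫ evr Y) ⊗≫ 𝟙 _ := by
        rw [whisker_exchange]; monoidal
    _ = _ := by rw [right_zigzag₁]; monoidal

lemma evl_slide {X Y : C} (f : X ⟶ Y) :
    pdual f ▷ X ≫ evl X = dual Y ◁ f ≫ evl Y := by
  unfold pdual
  calc _ = 𝟙 _ ⊗≫ dual Y ◁ (coevl X ≫ f ▷ dual X) ▷ X ⊗≫ (evl Y ▷ (dual X ⊗ X) ≫ 𝟙_ C ◁ evl X) ⊗≫ 𝟙 _ := by monoidal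
    _ = 𝟙 _ ⊗≫ dual Y ◁ ((λ_ X).inv ≫ (coevl X ▷ X) ≫ (α_ X (dual X) X).hom ≫ (X ◁ evl X) ≫ (ρ_ X).hom) ⊗≫ (dual Y ◁ f ≫ evl Y) ⊗≫ 𝟙 _ := by
        rw [← whisker_exchange]
        have : f ▷ (dual X ⊗ X) ≫ Y ◁ evl X = X ◁ evl X ≫ f ▷ 𝟙_ C := (whisker_exchange _ _).symm
        calc _ = 𝟙 _ ⊗≫ dual Y ◁ coevl X ▷ X ⊗≫ dual Y ◁ (f ▷ (dual X ⊗ X) ≫ Y ◁ evl X) ⊗≫ evl Y ⊗≫ 𝟙 _ := by monoidal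
          _ = _ := by rw [this]; monoidal
    _ = _ := by rw [left_zigzag₁]; monoidal

/-- uniqueness: the left dual is characterized by `evl_slide`. -/
lemma eq_pdual_of_evl {X Y : C} (f : X ⟶ Y) (g : dual Y ⟶ dual X)
    (h : g ▷ X ≫ evl X = dual Y ◁ f ≫ evl Y) : g = pdual f := by
  have key : ∀ g : dual Y ⟶ dual X, g = 𝟙 _ ⊗≫ dual Y ◁ coevl X ⊗≫ (g ▷ X ≫ evl X) ▷ dual X ⊗≫ 𝟙 _ := by
    intro g
    symm
    calc _ = 𝟙 _ ⊗≫ (dual Y ◁ coevl X ≫ g ▷ (X ⊗ dual X)) ⊗≫ evl X ▷ dual X ⊗≫ 𝟙 _ := by monoidal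
      _ = g ≫ ((ρ_ (dual X)).inv ≫ (dual X ◁ coevl X) ≫ (α_ (dual X) X (dual X)).inv ≫
      (evl X ▷ dual X) ≫ (λ_ (dual X)).hom) := by rw [whisker_exchange]; monoidal
      _ = _ := by rw [left_zigzag₂]; simp
  rw [key g, h, key (pdual f), evl_slide]

lemma trr_cyclic {X Y : C} (f : X ⟶ Y) (g : Y ⟶ X) : trr (f ≫ g) = trr (g ≫ f) := by
  unfold trr
  calc _ = (coevl X ≫ f ▷ dual X) ≫ g ▷ dual X ≫ evr X := by simp
    _ = coevl Y ≫ (Y ◁ pdual f ≫ g ▷ dual X) ≫ evr X := by rw [coevl_slide]; simp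
    _ = coevl Y ≫ g ▷ dual Y ≫ (X ◁ pdual f ≫ evr X) := by rw [whisker_exchange]; simp
    _ = _ := by rw [← evr_slide]; simp

/-- Left partial trace. -/
def twistL (A : C) (s : A ⊗ A ⟶ A ⊗ A) : A ⟶ A :=
  (λ_ A).inv ≫ (coevr A ▷ A) ≫ (α_ (dual A) A A).hom ≫ (dual A ◁ s) ≫
    (α_ (dual A) A A).inv ≫ (evl A ▷ A) ≫ (λ_ A).hom

lemma trl_twist (A : C) (s : A ⊗ A ⟶ A ⊗ A) : trl (twistHom A s) = trr (twistL A s) := by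
  unfold trl trr twistHom twistL
  calc _ = 𝟙 _ ⊗≫ (coevr A ▷ 𝟙_ C ≫ (dual A ⊗ A) ◁ coevl A) ⊗≫ dual A ◁ s ▷ dual A ⊗≫
        ((dual A ⊗ A) ◁ evr A ≫ evl A ▷ 𝟙_ C) ⊗≫ 𝟙 _ := by monoidal
    _ = _ := by
      have h1 : coevr A ▷ 𝟙_ C ≫ (dual A ⊗ A) ◁ coevl A = 𝟙_ C ◁ coevl A ≫ coevr A ▷ (A ⊗ dual A) :=
        (whisker_exchange _ _).symm
      have h2 : (dual A ⊗ A) ◁ evr A ≫ evl A ▷ 𝟙_ C = evl A ▷ (A ⊗ dual A) ≫ 𝟙_ C ◁ evr A :=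
        whisker_exchange _ _
      rw [h1, h2]; monoidal

lemma trace_twist [SphericalCat C] (A : C) (σ : HalfBraiding A) (g : A ⟶ A) :
    trr (twistHom A (σ.β A).hom ≫ g) = trr (g ≫ twistL A (σ.β A).hom) := by
  rw [trr_cyclic]
  have hn := σ.naturality g
  have e1 : twistHom A (σ.β A).hom ≫ g = twistHom A ((σ.β A).hom ≫ g ▷ A) := by
    unfold twistHom
    have : A ◁ evr A ≫ g ▷ (𝟙_ C) = g ▷ (A ⊗ dual A) ≫ A ◁ evr A := whisker_exchange _ _
    calc _ = 𝟙 _ ⊗≫ A ◁ coevl A ⊗≫ (σ.β A).hom ▷ dual A ⊗≫ (A ◁ evr A ≫ g ▷ (𝟙_ C)) ⊗≫ 𝟙 _ := by monoidal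
      _ = _ := by rw [this]; monoidal
  have e2 : g ≫ twistL A (σ.β A).hom = twistL A (A ◁ g ≫ (σ.β A).hom) := by
    unfold twistL
    have : (𝟙_ C) ◁ g ≫ coevr A ▷ A = coevr A ▷ A ≫ (dual A ⊗ A) ◁ g := whisker_exchange _ _
    calc _ = 𝟙 _ ⊗≫ ((𝟙_ C) ◁ g ≫ coevr A ▷ A) ⊗≫ dual A ◁ (σ.β A).hom ⊗≫ evl A ▷ A ⊗≫ 𝟙 _ := by monoidal
      _ = _ := by rw [this]; monoidal
  rw [trr_cyclic, e2, hn, ← trl_twist, ← e1, SphericalCat.tr_eq]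

lemma beta_unit (A : C) (σ : HalfBraiding A) : (σ.β (𝟙_ C)).hom = (ρ_ A).hom ≫ (λ_ A).inv := by
  have h1 := σ.naturality (λ_ (𝟙_ C)).hom
  rw [σ.monoidal] at h1
  have h2 : ((σ.β (𝟙_ C)).hom ≫ (λ_ A).hom) ▷ 𝟙_ C = (ρ_ A).hom ▷ 𝟙_ C := by
    rw [← cancel_mono (σ.β (𝟙_ C)).hom, ← cancel_epi (α_ A (𝟙_ C) (𝟙_ C)).inv]
    calc _ = 𝟙 _ ⊗≫ (σ.β (𝟙_ C)).hom ▷ 𝟙_ C ⊗≫ (σ.β (𝟙_ C)).hom ⊗≫ 𝟙 _ := by monoidal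
      _ = ((α_ A (𝟙_ C) (𝟙_ C)).inv ≫ (σ.β (𝟙_ C)).hom ▷ 𝟙_ C ≫ (α_ _ _ _).hom ≫
          𝟙_ C ◁ (σ.β (𝟙_ C)).hom ≫ (α_ _ _ _).inv) ≫ (λ_ (𝟙_ C)).hom ▷ A := by monoidal
      _ = _ := by rw [← h1]; monoidal
  have h3 : (σ.β (𝟙_ C)).hom ≫ (λ_ A).hom = (ρ_ A).hom :=
    (MonoidalCategory.whiskerRight_iff _ _).1 h2
  rw [← h3]; simp

/-- inverse component at the dual. -/
lemma beta_dual (A X : C) (σ : HalfBraiding A) :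
    A ◁ coevl X ≫ (α_ A X (dual X)).inv ≫ (σ.β X).hom ▷ dual X ≫ (α_ X A (dual X)).hom =
      (ρ_ A).hom ≫ (λ_ A).inv ≫ coevl X ▷ A ≫ (α_ X (dual X) A).hom ≫ X ◁ (σ.β (dual X)).inv := by
  have h := σ.naturality (coevl X)
  rw [σ.monoidal, beta_unit] at h
  rw [← cancel_mono (X ◁ (σ.β (dual X)).hom), ← cancel_mono (α_ X (dual X) A).inv]
  simpa [← MonoidalCategory.whiskerLeft_comp] using h

lemma coevr_beta (A : C) (σ : HalfBraiding A) :
    coevr A ≫ (σ.β (dual A)).inv = coevl A ≫ twistL A (σ.β A).hom ▷ dual A := by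
  unfold twistL
  symm
  calc _ = 𝟙 _ ⊗≫ (𝟙_ C ◁ coevl A ≫ coevr A ▷ (A ⊗ dual A)) ⊗≫ dual A ◁ (σ.β A).hom ▷ dual A ⊗≫
        evl A ▷ (A ⊗ dual A) ⊗≫ 𝟙 _ := by monoidal
    _ = 𝟙 _ ⊗≫ coevr A ⊗≫ dual A ◁ (A ◁ coevl A ≫ (α_ A A (dual A)).inv ≫ (σ.β A).hom ▷ dual A ≫ (α_ A A (dual A)).hom) ⊗≫
        evl A ▷ (A ⊗ dual A) ⊗≫ 𝟙 _ := by rw [whisker_exchange]; monoidal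
    _ = 𝟙 _ ⊗≫ coevr A ⊗≫ dual A ◁ coevl A ▷ A ⊗≫ ((dual A ⊗ A) ◁ (σ.β (dual A)).inv ≫
        evl A ▷ (A ⊗ dual A)) ⊗≫ 𝟙 _ := by rw [beta_dual]; monoidal
    _ = 𝟙 _ ⊗≫ coevr A ⊗≫ ((ρ_ (dual A)).inv ≫ (dual A ◁ coevl A) ≫ (α_ (dual A) A (dual A)).inv ≫
      (evl A ▷ dual A) ≫ (λ_ (dual A)).hom) ▷ A ⊗≫ (σ.β (dual A)).inv ⊗≫ 𝟙 _ := by rw [whisker_exchange]; monoidal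
    _ = _ := by rw [left_zigzag₂]; monoidal

lemma curry_evl {W Z : C} (h : W ⊗ Z ⟶ 𝟙_ C) :
    ((ρ_ W).inv ≫ W ◁ coevl Z ≫ (α_ W Z (dual Z)).inv ≫ h ▷ dual Z ≫ (λ_ (dual Z)).hom) ▷ Z ≫ evl Z
      = h := by
  calc _ = 𝟙 _ ⊗≫ W ◁ coevl Z ▷ Z ⊗≫ (h ▷ (dual Z ⊗ Z) ≫ 𝟙_ C ◁ evl Z) ⊗≫ 𝟙 _ := by monoidal
    _ = 𝟙 _ ⊗≫ W ◁ ((λ_ Z).inv ≫ (coevl Z ▷ Z) ≫ (α_ Z (dual Z) Z).hom ≫ (Z ◁ evl Z) ≫ (ρ_ Z).hom) ⊗≫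
        h ⊗≫ 𝟙 _ := by rw [← whisker_exchange]; monoidal
    _ = _ := by rw [left_zigzag₁]; monoidal

lemma curry_evr {W Z : C} (h : Z ⊗ W ⟶ 𝟙_ C) :
    Z ◁ ((λ_ W).inv ≫ coevr Z ▷ W ≫ (α_ (dual Z) Z W).hom ≫ dual Z ◁ h ≫ (ρ_ (dual Z)).hom) ≫ evr Z
      = h := by
  calc _ = 𝟙 _ ⊗≫ Z ◁ coevr Z ▷ W ⊗≫ ((Z ⊗ dual Z) ◁ h ≫ evr Z ▷ 𝟙_ C) ⊗≫ 𝟙 _ := by monoidal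
    _ = 𝟙 _ ⊗≫ ((ρ_ Z).inv ≫ (Z ◁ coevr Z) ≫ (α_ Z (dual Z) Z).inv ≫ (evr Z ▷ Z) ≫ (λ_ Z).hom) ▷ W ⊗≫
        h ⊗≫ 𝟙 _ := by rw [whisker_exchange]; monoidal
    _ = _ := by rw [right_zigzag₁]; monoidal

lemma mcon_evl (X Y : C) : mcon X Y ▷ (Y ⊗ X) ≫ evl (Y ⊗ X) =
    𝟙 _ ⊗≫ dual X ◁ evl Y ▷ X ⊗≫ evl X := by
  rw [← curry_evl (𝟙 _ ⊗≫ dual X ◁ evl Y ▷ X ⊗≫ evl X)]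
  congr 2
  unfold mcon
  monoidal

lemma mcon_evr (X Y : C) : (Y ⊗ X) ◁ mcon X Y ≫ evr (Y ⊗ X) =
    𝟙 _ ⊗≫ Y ◁ evr X ▷ dual Y ⊗≫ evr Y := by
  rw [← curry_evr (𝟙 _ ⊗≫ Y ◁ evr X ▷ dual Y ⊗≫ evr Y)]
  congr 2
  unfold mcon
  rw [constraint_eq]
  monoidal

/-- The canonical map to the double dual. -/
def phi (A : C) : A ⟶ dual (dual A) :=
  (ρ_ A).inv ≫ A ◁ coevl (dual A) ≫ (α_ A (dual A) (dual (dual A))).inv ≫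
    evr A ▷ dual (dual A) ≫ (λ_ (dual (dual A))).hom

lemma phi_coev (A : C) : coevr A ≫ dual A ◁ phi A = coevl (dual A) := by
  unfold phi
  calc _ = 𝟙 _ ⊗≫ (coevr A ▷ 𝟙_ C ≫ (dual A ⊗ A) ◁ coevl (dual A)) ⊗≫
        dual A ◁ evr A ▷ dual (dual A) ⊗≫ 𝟙 _ := by monoidal
    _ = 𝟙 _ ⊗≫ coevl (dual A) ⊗≫ ((λ_ (dual A)).inv ≫ (coevr A ▷ dual A) ≫
        (α_ (dual A) A (dual A)).hom ≫ (dual A ◁ evr A) ≫ (ρ_ (dual A)).hom) ▷ dual (dual A) ⊗≫ 𝟙 _ := by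
        rw [← whisker_exchange]; monoidal
    _ = _ := by rw [right_zigzag₂]; monoidal

/-- The map from the dual of the unit to the unit. -/
def eunit (C : Type u) [Category.{v} C] [MonoidalCategory C] [PivotalCat C] : dual (𝟙_ C) ⟶ 𝟙_ C :=
  (ρ_ (dual (𝟙_ C))).inv ≫ evl (𝟙_ C)

lemma eunit_split : (coevl (𝟙_ C) ≫ (λ_ (dual (𝟙_ C))).hom) ≫ eunit C = 𝟙 _ := by
  rw [← left_zigzag₁ (𝟙_ C)]
  unfold eunit
  monoidal

lemma pdual_evl (A : C) : eunit C ≫ coevl (dual A) ≫ mcon A (dual A) = pdual (evl A) := by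
  apply eq_pdual_of_evl
  calc _ = eunit C ▷ (dual A ⊗ A) ≫ coevl (dual A) ▷ (dual A ⊗ A) ≫
        (mcon A (dual A) ▷ (dual A ⊗ A) ≫ evl (dual A ⊗ A)) := by simp
    _ = eunit C ▷ (dual A ⊗ A) ⊗≫ ((λ_ (dual A)).inv ≫ (coevl (dual A) ▷ (dual A)) ≫
        (α_ (dual A) (dual (dual A)) (dual A)).hom ≫ (dual A ◁ evl (dual A)) ≫
        (ρ_ (dual A)).hom) ▷ A ⊗≫ evl A := by rw [mcon_evl]; monoidal
    _ = (eunit C ▷ (dual A ⊗ A) ≫ 𝟙_ C ◁ evl A) ⊗≫ 𝟙 _ := by rw [left_zigzag₁]; monoidal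
    _ = _ := by rw [← whisker_exchange]; unfold eunit; monoidal

lemma phi_ev (A : C) : dual A ◁ phi A ≫ evr (dual A) = evl A := by
  have h := evr_slide (evl A)
  rw [← pdual_evl] at h
  have hu : evr (𝟙_ C) = (λ_ (dual (𝟙_ C))).hom ≫ eunit C := by
    unfold eunit; rw [ev_unit]; simp
  have h1 : evl A ▷ dual (𝟙_ C) ≫ evr (𝟙_ C) =
      (dual A ⊗ A) ◁ eunit C ≫ (ρ_ _).hom ≫ evl A := by
    rw [hu]
    calc _ = (evl A ▷ dual (𝟙_ C) ≫ 𝟙_ C ◁ eunit C) ⊗≫ 𝟙 _ := by monoidal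
      _ = _ := by rw [← whisker_exchange]; monoidal
  have h2 : (dual A ⊗ A) ◁ (eunit C ≫ coevl (dual A) ≫ mcon A (dual A)) ≫ evr (dual A ⊗ A) =
      (dual A ⊗ A) ◁ eunit C ≫ (ρ_ _).hom ≫ dual A ◁ phi A ≫ evr (dual A) := by
    calc _ = (dual A ⊗ A) ◁ eunit C ≫ (dual A ⊗ A) ◁ coevl (dual A) ≫
          ((dual A ⊗ A) ◁ mcon A (dual A) ≫ evr (dual A ⊗ A)) := by simp
      _ = _ := by rw [mcon_evr]; unfold phi; monoidal
  rw [h1, h2] at h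
  have h3 := congrArg (fun t => (ρ_ (dual A ⊗ A)).inv ≫
    (dual A ⊗ A) ◁ (coevl (𝟙_ C) ≫ (λ_ (dual (𝟙_ C))).hom) ≫ t) h
  simp only [← MonoidalCategory.whiskerLeft_comp_assoc, eunit_split] at h3
  simpa using h3.symm

lemma twist_dual (A : C) (σ : HalfBraiding A) :
    twistHom (dual A) (dualBeta A (dual A) (σ.β (dual A))) = pdual (twistL A (σ.β A).hom) := by
  set s := σ.β (dual A) with hs
  have e1 : twistHom (dual A) (dualBeta A (dual A) s) =
      𝟙 _ ⊗≫ dual A ◁ coevr A ⊗≫ dualBeta A (dual A) s ▷ A ⊗≫ dual A ◁ evl A ⊗≫ 𝟙 _ := by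
    unfold twistHom
    have hx : (dual A ⊗ dual A) ◁ phi A ≫ dualBeta A (dual A) s ▷ dual (dual A) =
      dualBeta A (dual A) s ▷ A ≫ (dual A ⊗ dual A) ◁ phi A := whisker_exchange _ _
    calc _ = 𝟙 _ ⊗≫ dual A ◁ coevr A ⊗≫ ((dual A ⊗ dual A) ◁ phi A ≫
          dualBeta A (dual A) s ▷ dual (dual A)) ⊗≫ dual A ◁ evr (dual A) ⊗≫ 𝟙 _ := by
            rw [← phi_coev]; monoidal
      _ = 𝟙 _ ⊗≫ dual A ◁ coevr A ⊗≫ dualBeta A (dual A) s ▷ A ⊗≫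
          dual A ◁ (dual A ◁ phi A ≫ evr (dual A)) ⊗≫ 𝟙 _ := by rw [hx]; monoidal
      _ = _ := by rw [phi_ev]
  rw [e1]
  unfold dualBeta
  calc _ = 𝟙 _ ⊗≫ dual A ◁ coevr A ⊗≫ (dual A ⊗ dual A) ◁ coevl A ▷ A ⊗≫
        dual A ◁ s.inv ▷ (dual A ⊗ A) ⊗≫
        (evl A ▷ (dual A ⊗ dual A ⊗ A) ≫ 𝟙_ C ◁ (dual A ◁ evl A)) ⊗≫ 𝟙 _ := by monoidal
    _ = 𝟙 _ ⊗≫ dual A ◁ coevr A ⊗≫ (dual A ⊗ dual A) ◁ coevl A ▷ A ⊗≫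
        dual A ◁ (s.inv ▷ (dual A ⊗ A) ≫ (A ⊗ dual A) ◁ evl A) ⊗≫
        evl A ▷ dual A ⊗≫ 𝟙 _ := by rw [← whisker_exchange]; monoidal
    _ = 𝟙 _ ⊗≫ dual A ◁ coevr A ⊗≫ (dual A ⊗ dual A) ◁ ((λ_ A).inv ≫ (coevl A ▷ A) ≫
        (α_ A (dual A) A).hom ≫ (A ◁ evl A) ≫ (ρ_ A).hom) ⊗≫ dual A ◁ s.inv ⊗≫
        evl A ▷ dual A ⊗≫ 𝟙 _ := by rw [← whisker_exchange]; monoidal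
    _ = 𝟙 _ ⊗≫ dual A ◁ (coevr A ≫ s.inv) ⊗≫ evl A ▷ dual A ⊗≫ 𝟙 _ := by
        rw [left_zigzag₁]; monoidal
    _ = _ := by rw [hs, coevr_beta]; unfold pdual; monoidal

end helpers

section nondeg
variable (k : Type w) [CommRing k] {C : Type u}
    [Category.{v} C] [Preadditive C] [CategoryTheory.Linear k C] [MonoidalCategory C]
    [MonoidalPreadditive C] [CategoryTheory.MonoidalLinear k C]
    [CategoryTheory.Limits.HasFiniteBiproducts C] [PivotalCat C] [MonoidalKCat k C]
    [PreFusionCat k C]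

lemma evr_generates {i : C} (hi : IsSimpleObj k i) (y : i ⊗ dual i ⟶ 𝟙_ C) :
    ∃ c : k, y = c • evr i := by
  obtain ⟨c, hc⟩ := hi.2 ((ρ_ i).inv ≫ (i ◁ coevr i) ≫ (α_ i (dual i) i).inv ≫ (y ▷ i) ≫ (λ_ i).hom)
  refine ⟨c, ?_⟩
  symm
  calc _ = (c • 𝟙 i) ▷ dual i ≫ evr i := by simp [MonoidalLinear.smul_whiskerRight]
    _ = 𝟙 _ ⊗≫ i ◁ coevr i ▷ dual i ⊗≫ (y ▷ (i ⊗ dual i) ≫ 𝟙_ C ◁ evr i) ⊗≫ 𝟙 _ := by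
        dsimp only at hc
        rw [hc]; monoidal
    _ = 𝟙 _ ⊗≫ i ◁ ((λ_ (dual i)).inv ≫ (coevr i ▷ dual i) ≫ (α_ (dual i) i (dual i)).hom ≫
      (dual i ◁ evr i) ≫ (ρ_ (dual i)).hom) ⊗≫ y ⊗≫ 𝟙 _ := by rw [← whisker_exchange]; monoidal
    _ = y := by rw [right_zigzag₂]; monoidal

lemma dim_inj {i : C} (hi : IsSimpleObj k i) (c : k) (hc : c • trr (𝟙 i) = 0) : c = 0 := by
  obtain ⟨n, obj, p, q, hs, hsum, -, -⟩ := PreFusionCat.semisimple (k := k) (i ⊗ dual i)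
  have hu : IsSimpleObj k (𝟙_ C) := MonoidalKCat.unit_free
  have hd : trr (𝟙 i) = coevl i ≫ evr i := by simp [trr]
  rw [hd] at hc
  have h1 : ∀ a, c • (coevl i ≫ p a) = 0 := by
    intro a
    by_cases h : IsEmpty (𝟙_ C ≅ obj a)
    · rw [PreFusionCat.simple_hom_zero hu (hs a) h (coevl i ≫ p a), smul_zero]
    · rw [not_isEmpty_iff] at h
      obtain ⟨e⟩ := h
      obtain ⟨d, hd⟩ := evr_generates k hi (p a ≫ e.inv)
      rw [← cancel_mono e.inv]
      simp only [CategoryTheory.Linear.smul_comp, Category.assoc, hd, zero_comp]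
      rw [CategoryTheory.Linear.comp_smul, smul_comm, hc, smul_zero]
  have h2 : c • coevl i = 0 := by
    calc c • coevl i = c • (coevl i ≫ ∑ a, p a ≫ q a) := by rw [hsum]; simp
      _ = ∑ a, (c • (coevl i ≫ p a)) ≫ q a := by
        simp [Preadditive.comp_sum, Finset.smul_sum]
      _ = 0 := by simp [h1]
  apply hi.1
  dsimp only
  rw [zero_smul]
  have : c • 𝟙 i = (λ_ i).inv ≫ ((c • coevl i) ▷ i) ≫ (α_ i (dual i) i).hom ≫ (i ◁ evl i) ≫ (ρ_ i).hom := by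
    rw [← left_zigzag₁ i]; simp [MonoidalLinear.smul_whiskerRight]
  rw [this, h2]; simp

lemma trr_smul {X : C} (c : k) (f : X ⟶ X) : trr (c • f) = c • trr f := by
  simp [trr, MonoidalLinear.smul_whiskerRight]

lemma trr_sub {X : C} (f g : X ⟶ X) : trr (f - g) = trr f - trr g := by
  have : trr f = trr ((f - g) + g) := by simp
  rw [this]
  unfold trr
  rw [MonoidalPreadditive.add_whiskerRight]
  simp

lemma trr_nondeg (k : Type w) [CommRing k] {C : Type u}
    [Category.{v} C] [Preadditive C] [CategoryTheory.Linear k C] [MonoidalCategory C]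
    [MonoidalPreadditive C] [CategoryTheory.MonoidalLinear k C]
    [CategoryTheory.Limits.HasFiniteBiproducts C] [PivotalCat C] [MonoidalKCat k C]
    [PreFusionCat k C] {X : C} (f : X ⟶ X) (hf : ∀ g : X ⟶ X, trr (f ≫ g) = 0) : f = 0 := by
  obtain ⟨n, obj, p, q, hs, hsum, -, -⟩ := PreFusionCat.semisimple (k := k) X
  have h1 : ∀ a b, q a ≫ f ≫ p b = 0 := by
    intro a b
    by_cases h : IsEmpty (obj a ≅ obj b)
    · exact PreFusionCat.simple_hom_zero (hs a) (hs b) h _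
    · rw [not_isEmpty_iff] at h
      obtain ⟨e⟩ := h
      obtain ⟨c, hc⟩ := (hs a).2 ((q a ≫ f ≫ p b) ≫ e.inv)
      dsimp only at hc
      have h0 : trr ((q a ≫ f ≫ p b) ≫ e.inv) = 0 := by
        have := hf (p b ≫ e.inv ≫ q a)
        rw [Category.assoc, trr_cyclic]
        simpa using this
      rw [← hc, trr_smul] at h0
      have hc0 := dim_inj k (hs a) c h0
      rw [hc0, zero_smul] at hc
      rw [← cancel_mono e.inv, ← hc, zero_comp]
  calc f = (∑ a, p a ≫ q a) ≫ f ≫ (∑ b, p b ≫ q b) := by rw [hsum]; simp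
    _ = ∑ a, ∑ b, p a ≫ (q a ≫ f ≫ p b) ≫ q b := by
      simp [Preadditive.comp_sum, Preadditive.sum_comp]
      try exact Finset.sum_comm
    _ = 0 := by simp [h1]

end nondeg
end PivotalCat

open PivotalCat in
/-- For a spherical fusion category `C` over a commutative ring `k`, the center `Z(C)`
(with its braiding and its pivotal structure) is a ribbon category: for every half
braiding `(A, σ)` of `C`, the dual morphism `(θ_{(A,σ)})* : A* ⟶ A*` of the twist
`θ_{(A,σ)} = (id_A ⊗ ev_r A)(σ_A ⊗ id_{A*})(id_A ⊗ coev_l A) : A ⟶ A` equals the twist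
`θ_{(A,σ)*}` of the dual half braiding `(A, σ)* = (A*, σ^∨)`. -/
theorem center_of_spherical_fusion_is_ribbon (k : Type w) [CommRing k] (C : Type u)
    [Category.{v} C] [Preadditive C] [CategoryTheory.Linear k C] [MonoidalCategory C]
    [MonoidalPreadditive C] [CategoryTheory.MonoidalLinear k C]
    [CategoryTheory.Limits.HasFiniteBiproducts C] [PivotalCat C] [MonoidalKCat k C]
    [PreFusionCat k C] [FusionCat k C] [SphericalCat C]
    (A : C) (σ : HalfBraiding A) :
    pdual (twistHom A (σ.β A).hom) =
      twistHom (dual A) (dualBeta A (dual A) (σ.β (dual A))) := by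
  rw [twist_dual]
  congr 1
  rw [← sub_eq_zero]
  apply trr_nondeg k
  intro g
  rw [Preadditive.sub_comp, trr_sub, trace_twist, trr_cyclic, sub_self]
end

section
/- Let C be a fusion category over a commutative ring k and I a representative set of its simple objects. Then the pivotal braided category Z(C) admits a coend: the functor Z(C)^op × Z(C) → Z(C), (M,N) ↦ M* ⊗ N, has a coend (C̃, ρ), and the underlying object of C̃, i.e. its image under the forgetful functor Z(C) → C, is isomorphic to ⊕_{i,j∈I} i* ⊗ j* ⊗ i ⊗ j. -/
open CategoryTheory CategoryTheory.Limits MonoidalCategory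

universe v u w

namespace CoendPf
open PivotalCat ExactPairing
section
variable {C : Type u} [Category.{v} C] [MonoidalCategory C]

@[reducible] def pairL [PivotalCat C] (X : C) : ExactPairing X (dual X) where
  coevaluation' := coevl X
  evaluation' := evl X
  coevaluation_evaluation' := by
    have := left_zigzag₂ X
    rw [Iso.inv_comp_eq, ← Category.assoc, ← Category.assoc] at this
    rw [← Iso.eq_comp_inv] at this
    simpa using this
  evaluation_coevaluation' := by
    have := left_zigzag₁ X
    rw [Iso.inv_comp_eq, ← Category.assoc, ← Category.assoc] at this
    rw [← Iso.eq_comp_inv] at this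
    simpa using this

@[reducible] def pairR [PivotalCat C] (X : C) : ExactPairing (dual X) X where
  coevaluation' := coevr X
  evaluation' := evr X
  coevaluation_evaluation' := by
    have := right_zigzag₁ X
    rw [Iso.inv_comp_eq, ← Category.assoc, ← Category.assoc] at this
    rw [← Iso.eq_comp_inv] at this
    simpa using this
  evaluation_coevaluation' := by
    have := right_zigzag₂ X
    rw [Iso.inv_comp_eq, ← Category.assoc, ← Category.assoc] at this
    rw [← Iso.eq_comp_inv] at this
    simpa using this

/-- A lax (inverse) half braiding along objects with duals is invertible. -/
theorem lax_inv (A : C) (τ : ∀ Z : C, Z ⊗ A ⟶ A ⊗ Z)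
    (nat : ∀ {Z Z' : C} (f : Z ⟶ Z'), f ▷ A ≫ τ Z' = τ Z ≫ A ◁ f)
    (mon : ∀ Z Z' : C, τ (Z ⊗ Z') =
      (α_ _ _ _).hom ≫ Z ◁ τ Z' ≫ (α_ _ _ _).inv ≫ τ Z ▷ Z' ≫ (α_ _ _ _).hom)
    (unit : τ (𝟙_ C) = (λ_ A).hom ≫ (ρ_ A).inv) (Z Z' : C) [ExactPairing Z Z'] :
    ∃ σ : A ⊗ Z ⟶ Z ⊗ A, σ ≫ τ Z = 𝟙 _ ∧ τ Z ≫ σ = 𝟙 _ := by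
  have h1 : η_ Z Z' ▷ A ≫ (α_ _ _ _).hom ≫ Z ◁ τ Z' ≫ (α_ _ _ _).inv ≫ τ Z ▷ Z' ≫ (α_ _ _ _).hom
      = (λ_ A).hom ≫ (ρ_ A).inv ≫ A ◁ η_ Z Z' := by
    rw [← mon, nat, unit, Category.assoc]
  have h2 : (α_ _ _ _).hom ≫ Z' ◁ τ Z ≫ (α_ _ _ _).inv ≫ τ Z' ▷ Z ≫ (α_ _ _ _).hom ≫ A ◁ ε_ Z Z'
      = ε_ Z Z' ▷ A ≫ (λ_ A).hom ≫ (ρ_ A).inv := by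
    rw [← unit, nat, mon]; simp
  refine ⟨𝟙 _ ⊗≫ η_ Z Z' ▷ (A ⊗ Z) ⊗≫ Z ◁ τ Z' ▷ Z ⊗≫ (Z ⊗ A) ◁ ε_ Z Z' ⊗≫ 𝟙 _, ?_, ?_⟩
  · calc _ = 𝟙 _ ⊗≫ η_ Z Z' ▷ (A ⊗ Z) ⊗≫ Z ◁ τ Z' ▷ Z ⊗≫
          ((Z ⊗ A) ◁ ε_ Z Z' ≫ τ Z ▷ (𝟙_ C)) ⊗≫ 𝟙 _ := by monoidal
      _ = 𝟙 _ ⊗≫ (η_ Z Z' ▷ A ≫ (α_ _ _ _).hom ≫ Z ◁ τ Z' ≫ (α_ _ _ _).inv ≫ τ Z ▷ Z' ≫ (α_ _ _ _).hom) ▷ Z ⊗≫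
          A ◁ Z ◁ ε_ Z Z' ⊗≫ 𝟙 _ := by rw [whisker_exchange]; monoidal
      _ = 𝟙 _ ⊗≫ A ◁ (η_ Z Z' ▷ Z ⊗≫ Z ◁ ε_ Z Z') ⊗≫ 𝟙 _ := by rw [h1]; monoidal
      _ = _ := by rw [evaluation_coevaluation'']; monoidal
  · calc _ = 𝟙 _ ⊗≫ ((𝟙_ C) ◁ τ Z ≫ η_ Z Z' ▷ (A ⊗ Z)) ⊗≫ Z ◁ τ Z' ▷ Z ⊗≫ (Z ⊗ A) ◁ ε_ Z Z' ⊗≫ 𝟙 _ := by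
          monoidal
      _ = 𝟙 _ ⊗≫ η_ Z Z' ▷ Z ▷ A ⊗≫ Z ◁ ((α_ _ _ _).hom ≫ Z' ◁ τ Z ≫ (α_ _ _ _).inv ≫ τ Z' ▷ Z ≫ (α_ _ _ _).hom ≫ A ◁ ε_ Z Z') ⊗≫ 𝟙 _ := by
          rw [whisker_exchange]; monoidal
      _ = 𝟙 _ ⊗≫ (η_ Z Z' ▷ Z ⊗≫ Z ◁ ε_ Z Z') ▷ A ⊗≫ 𝟙 _ := by rw [h2]; monoidal
      _ = _ := by rw [evaluation_coevaluation'']; monoidal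

theorem lax_hom (A : C) (σ : ∀ Z : C, A ⊗ Z ⟶ Z ⊗ A)
    (nat : ∀ {Z Z' : C} (f : Z ⟶ Z'), A ◁ f ≫ σ Z' = σ Z ≫ f ▷ A)
    (mon : ∀ Z Z' : C, σ (Z ⊗ Z') =
      (α_ _ _ _).inv ≫ σ Z ▷ Z' ≫ (α_ _ _ _).hom ≫ Z ◁ σ Z' ≫ (α_ _ _ _).inv)
    (unit : σ (𝟙_ C) = (ρ_ A).hom ≫ (λ_ A).inv) (Z Z' : C) [ExactPairing Z' Z] :
    ∃ τ : Z ⊗ A ⟶ A ⊗ Z, σ Z ≫ τ = 𝟙 _ ∧ τ ≫ σ Z = 𝟙 _ := by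
  have h1 : A ◁ η_ Z' Z ≫ (α_ _ _ _).inv ≫ σ Z' ▷ Z ≫ (α_ _ _ _).hom ≫ Z' ◁ σ Z ≫ (α_ _ _ _).inv
      = (ρ_ A).hom ≫ (λ_ A).inv ≫ η_ Z' Z ▷ A := by
    rw [← mon, nat, unit, Category.assoc]
  have h2 : (α_ _ _ _).inv ≫ σ Z ▷ Z' ≫ (α_ _ _ _).hom ≫ Z ◁ σ Z' ≫ (α_ _ _ _).inv ≫ ε_ Z' Z ▷ A
      = A ◁ ε_ Z' Z ≫ (ρ_ A).hom ≫ (λ_ A).inv := by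
    rw [← unit, nat, mon]; simp
  refine ⟨𝟙 _ ⊗≫ (Z ⊗ A) ◁ η_ Z' Z ⊗≫ Z ◁ σ Z' ▷ Z ⊗≫ ε_ Z' Z ▷ (A ⊗ Z) ⊗≫ 𝟙 _, ?_, ?_⟩
  · calc _ = 𝟙 _ ⊗≫ (σ Z ▷ (𝟙_ C) ≫ (Z ⊗ A) ◁ η_ Z' Z) ⊗≫ Z ◁ σ Z' ▷ Z ⊗≫ ε_ Z' Z ▷ (A ⊗ Z) ⊗≫ 𝟙 _ := by
          monoidal
      _ = 𝟙 _ ⊗≫ A ◁ Z ◁ η_ Z' Z ⊗≫ ((α_ _ _ _).inv ≫ σ Z ▷ Z' ≫ (α_ _ _ _).hom ≫ Z ◁ σ Z' ≫ (α_ _ _ _).inv ≫ ε_ Z' Z ▷ A) ▷ Z ⊗≫ 𝟙 _ := by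
          rw [← whisker_exchange]; monoidal
      _ = 𝟙 _ ⊗≫ A ◁ (Z ◁ η_ Z' Z ⊗≫ ε_ Z' Z ▷ Z) ⊗≫ 𝟙 _ := by rw [h2]; monoidal
      _ = _ := by rw [coevaluation_evaluation'']; monoidal
  · calc _ = 𝟙 _ ⊗≫ (Z ⊗ A) ◁ η_ Z' Z ⊗≫ Z ◁ σ Z' ▷ Z ⊗≫
          (ε_ Z' Z ▷ (A ⊗ Z) ≫ (𝟙_ C) ◁ σ Z) ⊗≫ 𝟙 _ := by monoidal
      _ = 𝟙 _ ⊗≫ Z ◁ (A ◁ η_ Z' Z ≫ (α_ _ _ _).inv ≫ σ Z' ▷ Z ≫ (α_ _ _ _).hom ≫ Z' ◁ σ Z ≫ (α_ _ _ _).inv) ⊗≫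
          ε_ Z' Z ▷ Z ▷ A ⊗≫ 𝟙 _ := by rw [← whisker_exchange]; monoidal
      _ = 𝟙 _ ⊗≫ (Z ◁ η_ Z' Z ⊗≫ ε_ Z' Z ▷ Z) ▷ A ⊗≫ 𝟙 _ := by rw [h1]; monoidal
      _ = _ := by rw [coevaluation_evaluation'']; monoidal

theorem halfBraiding_of_inv [PivotalCat C] (A : C) (τ : ∀ Z : C, Z ⊗ A ⟶ A ⊗ Z)
    (nat : ∀ {Z Z' : C} (f : Z ⟶ Z'), f ▷ A ≫ τ Z' = τ Z ≫ A ◁ f)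
    (mon : ∀ Z Z' : C, τ (Z ⊗ Z') =
      (α_ _ _ _).hom ≫ Z ◁ τ Z' ≫ (α_ _ _ _).inv ≫ τ Z ▷ Z' ≫ (α_ _ _ _).hom)
    (unit : τ (𝟙_ C) = (λ_ A).hom ≫ (ρ_ A).inv) :
    ∃ h : HalfBraiding A, ∀ Z, (h.β Z).inv = τ Z := by
  choose σ h1 h2 using fun Z : C => by
    letI := pairL Z
    exact lax_inv A τ nat mon unit Z (dual Z)
  refine ⟨⟨fun Z => ⟨σ Z, τ Z, h1 Z, h2 Z⟩, ?_, ?_⟩, fun Z => rfl⟩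
  · intro U V
    have e : ∀ Z, IsIso (τ Z) := fun Z => ⟨σ Z, h2 Z, h1 Z⟩
    dsimp only
    rw [← cancel_mono (τ (U ⊗ V)), h1, mon]
    have a := fun Z => congrArg (fun f => U ◁ f) (h1 Z)
    have b := fun Z => congrArg (fun f => f ▷ V) (h1 Z)
    simp only [MonoidalCategory.whiskerLeft_comp, comp_whiskerRight,
      MonoidalCategory.whiskerLeft_id, id_whiskerRight] at a b
    simp [reassoc_of% (a V), reassoc_of% (b U)]
  · intro U V f
    have e : ∀ Z, IsIso (τ Z) := fun Z => ⟨σ Z, h2 Z, h1 Z⟩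
    dsimp only
    rw [← cancel_mono (τ V), Category.assoc, h1, Category.assoc, nat, reassoc_of% (h1 U)]
    simp

theorem halfBraiding_of_hom [PivotalCat C] (A : C) (σ : ∀ Z : C, A ⊗ Z ⟶ Z ⊗ A)
    (nat : ∀ {Z Z' : C} (f : Z ⟶ Z'), A ◁ f ≫ σ Z' = σ Z ≫ f ▷ A)
    (mon : ∀ Z Z' : C, σ (Z ⊗ Z') =
      (α_ _ _ _).inv ≫ σ Z ▷ Z' ≫ (α_ _ _ _).hom ≫ Z ◁ σ Z' ≫ (α_ _ _ _).inv)
    (unit : σ (𝟙_ C) = (ρ_ A).hom ≫ (λ_ A).inv) :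
    ∃ h : HalfBraiding A, ∀ Z, (h.β Z).hom = σ Z := by
  choose τ h1 h2 using fun Z : C => by
    letI := pairR Z
    exact lax_hom A σ nat mon unit Z (dual Z)
  exact ⟨⟨fun Z => ⟨σ Z, τ Z, h1 Z, h2 Z⟩, mon, nat⟩, fun Z => rfl⟩

end
end CoendPf


namespace CoendPf
open PivotalCat ExactPairing
section
variable (k : Type w) [CommRing k] {C : Type u}
    [Category.{v} C] [Preadditive C] [CategoryTheory.Linear k C] [MonoidalCategory C]
    [MonoidalPreadditive C] [CategoryTheory.MonoidalLinear k C]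
    [CategoryTheory.Limits.HasFiniteBiproducts C] [PivotalCat C] [MonoidalKCat k C]
    [PreFusionCat k C]
    {I : Finset C} (hI : IsRepresentativeSet k C ↑I)
include hI

theorem decomp (X : C) : ∃ (n : ℕ) (o : Fin n → I) (p : ∀ a, X ⟶ (o a).1) (q : ∀ a, (o a).1 ⟶ X),
    ∑ a, p a ≫ q a = 𝟙 X := by
  obtain ⟨n, obj, p, q, hs, h, -, -⟩ := PreFusionCat.semisimple (k := k) X
  choose i hi using fun a => (hI.2.2 (obj a) (hs a)).exists
  refine ⟨n, fun a => ⟨i a, hi a |>.1⟩, fun a => p a ≫ (hi a).2.some.hom,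
    fun a => (hi a).2.some.inv ≫ q a, ?_⟩
  simpa using h

theorem homI {i j : I} (f : i.1 ⟶ j.1) : f = 0 ∨ ∃ h : i = j, ∃ c : k, f = c • eqToHom (by rw [h]) := by
  by_cases h : i = j
  · right
    subst h
    refine ⟨rfl, ?_⟩
    obtain ⟨c, hc⟩ := (hI.2.1 i.1 i.2).2 f
    exact ⟨c, by simpa using hc.symm⟩
  · left
    refine PreFusionCat.simple_hom_zero (k := k) (hI.2.1 _ i.2) (hI.2.1 _ j.2) ⟨fun e => h ?_⟩ f
    exact Subtype.ext ((hI.2.2 i.1 (hI.2.1 _ i.2)).unique ⟨i.2, ⟨Iso.refl _⟩⟩ ⟨j.2, ⟨e⟩⟩)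

variable {E : Type*} [Category E] [Preadditive E] [CategoryTheory.Linear k E]

theorem nat_ext_unique {P Q : C ⥤ E} [Q.Additive] {s t : P ⟶ Q} (h : ∀ i : I, s.app i.1 = t.app i.1) :
    s = t := by
  ext X
  obtain ⟨n, o, p, q, e⟩ := decomp k hI X
  rw [← Category.comp_id (s.app X), ← Category.comp_id (t.app X), ← Q.map_id, ← e]
  simp only [Functor.map_sum, Functor.map_comp, Preadditive.comp_sum]
  refine Finset.sum_congr rfl fun a _ => ?_
  rw [← s.naturality_assoc, ← t.naturality_assoc, h]

theorem nat_ext_exists {P Q : C ⥤ E} [P.Additive] [P.Linear k] [Q.Additive] [Q.Linear k]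
    (t : ∀ i : I, P.obj i.1 ⟶ Q.obj i.1) : ∃ s : P ⟶ Q, ∀ i : I, s.app i.1 = t i := by
  have key : ∀ {i j : I} (f : i.1 ⟶ j.1), P.map f ≫ t j = t i ≫ Q.map f := by
    intro i j f
    rcases homI k hI f with rfl | ⟨rfl, c, rfl⟩
    · simp
    · simp
  choose n o p q e using decomp k hI
  refine ⟨{ app := fun X => ∑ a, P.map (p X a) ≫ t (o X a) ≫ Q.map (q X a), naturality := ?_ }, ?_⟩
  · intro X Y f
    have h1 : ∀ a, P.map f ≫ P.map (p Y a) =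
        ∑ b, P.map (p X b) ≫ P.map (q X b ≫ f ≫ p Y a) := by
      intro a
      simp only [← P.map_comp, ← P.map_sum]
      congr 1
      simp only [← Category.assoc, ← Preadditive.sum_comp, e, Category.id_comp]
    have h2 : ∀ b, Q.map (q X b) ≫ Q.map f =
        ∑ a, Q.map (q X b ≫ f ≫ p Y a) ≫ Q.map (q Y a) := by
      intro b
      simp only [← Q.map_comp, ← Q.map_sum]
      congr 1
      simp only [Category.assoc, ← Preadditive.comp_sum, e, Category.comp_id]
    simp only [Preadditive.comp_sum, Preadditive.sum_comp, Category.assoc, h2]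
    simp only [← Category.assoc, h1]
    simp only [Preadditive.sum_comp, Category.assoc]
    rw [Finset.sum_comm]
    refine Finset.sum_congr rfl fun b _ => Finset.sum_congr rfl fun a _ => ?_
    rw [← Category.assoc (t _), ← key]
    simp only [Category.assoc]
  · intro i
    have : ∀ a, P.map (p i.1 a) ≫ t (o i.1 a) ≫ Q.map (q i.1 a) = t i ≫ Q.map (p i.1 a ≫ q i.1 a) := by
      intro a
      rw [← Category.assoc, key, Category.assoc, Q.map_comp]
    simp only [this, ← Preadditive.comp_sum, ← Q.map_sum, e]
    simp

end
end CoendPf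


namespace CoendPf
open PivotalCat ExactPairing

/-- An object representing the natural families `Y ⊗ W ⟶ X ⊗ Y`. -/
structure RData {C : Type u} [Category.{v} C] [MonoidalCategory C] (X : C) where
  R : C
  θ : ∀ Y : C, Y ⊗ R ⟶ X ⊗ Y
  nat : ∀ {Y Y' : C} (f : Y ⟶ Y'), f ▷ R ≫ θ Y' = θ Y ≫ X ◁ f
  ex : ∀ {W : C} (t : ∀ Y : C, Y ⊗ W ⟶ X ⊗ Y),
    (∀ {Y Y' : C} (f : Y ⟶ Y'), f ▷ W ≫ t Y' = t Y ≫ X ◁ f) → ∃ h : W ⟶ R, ∀ Y, Y ◁ h ≫ θ Y = t Y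
  ext : ∀ {W : C} {g h : W ⟶ R}, (∀ Y, Y ◁ g ≫ θ Y = Y ◁ h ≫ θ Y) → g = h

section
variable (k : Type w) [CommRing k] {C : Type u}
    [Category.{v} C] [Preadditive C] [CategoryTheory.Linear k C] [MonoidalCategory C]
    [MonoidalPreadditive C] [CategoryTheory.MonoidalLinear k C]
    [CategoryTheory.Limits.HasFiniteBiproducts C] [PivotalCat C] [MonoidalKCat k C]
    [PreFusionCat k C]
    {I : Finset C} (hI : IsRepresentativeSet k C ↑I)
include hI

theorem exists_R (X : C) : ∃ r : RData X, r.R = ⨁ fun j : I => dual j.1 ⊗ (X ⊗ j.1) := by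
  letI (j : I) := pairR j.1
  let R := ⨁ fun j : I => dual j.1 ⊗ (X ⊗ j.1)
  obtain ⟨θ, hθ⟩ := nat_ext_exists k hI (P := tensorRight R) (Q := tensorLeft X)
    (fun j => (tensorLeftHomEquiv R (dual j.1) j.1 (X ⊗ j.1)).symm (biproduct.π _ j))
  have key : ∀ {W : C} (h : W ⟶ R) (j : I), j.1 ◁ h ≫ θ.app j.1 =
      (tensorLeftHomEquiv W (dual j.1) j.1 (X ⊗ j.1)).symm (h ≫ biproduct.π _ j) := by
    intro W h j
    rw [hθ, tensorLeftHomEquiv_symm_naturality]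
  refine ⟨⟨R, θ.app, fun f => θ.naturality f, ?_, ?_⟩, rfl⟩
  · intro W t ht
    let h : W ⟶ R := biproduct.lift fun j => tensorLeftHomEquiv W (dual j.1) j.1 (X ⊗ j.1) (t j.1)
    refine ⟨h, fun Y => ?_⟩
    have := nat_ext_unique k hI (P := tensorRight W) (Q := tensorLeft X)
      (s := { app := fun Y => Y ◁ h ≫ θ.app Y
              naturality := fun Y Y' f => by
                have : f ▷ R ≫ θ.app Y' = θ.app Y ≫ X ◁ f := θ.naturality f
                change f ▷ W ≫ Y' ◁ h ≫ θ.app Y' = (Y ◁ h ≫ θ.app Y) ≫ X ◁ f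
                rw [← whisker_exchange_assoc, Category.assoc, this] })
      (t := { app := t, naturality := fun Y Y' f => ht f }) (fun i => by
        simp only [key]
        rw [Equiv.symm_apply_eq]
        simp [h])
    exact congrArg (fun s => s.app Y) this
  · intro W g h e
    apply biproduct.hom_ext
    intro j
    have := e j.1
    rw [key, key] at this
    exact (Equiv.injective _) this

end
end CoendPf


namespace CoendPf
open PivotalCat ExactPairing

namespace RData
section
variable {C : Type u} [Category.{v} C] [MonoidalCategory C] [PivotalCat C]
variable {X : C} (r : RData X)

theorem symm_fact {W Z Z' Y : C} [ExactPairing Z' Z] (h : W ⟶ r.R ⊗ Z) :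
    (tensorRightHomEquiv (Y ⊗ W) Z' Z (X ⊗ Y)).symm (Y ◁ h ≫ (α_ _ _ _).inv ≫ r.θ Y ▷ Z) =
      (α_ _ _ _).hom ≫ Y ◁ ((tensorRightHomEquiv W Z' Z r.R).symm h) ≫ r.θ Y := by
  simp only [tensorRightHomEquiv, Equiv.coe_fn_symm_mk]
  calc _ = 𝟙 _ ⊗≫ Y ◁ h ▷ Z' ⊗≫ (r.θ Y ▷ (Z ⊗ Z') ≫ (X ⊗ Y) ◁ ε_ Z' Z) ⊗≫ 𝟙 _ := by monoidal
    _ = _ := by rw [← whisker_exchange]; monoidal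

theorem extZ {W Z : C} {g h : W ⟶ r.R ⊗ Z}
    (e : ∀ Y, Y ◁ g ≫ (α_ _ _ _).inv ≫ r.θ Y ▷ Z = Y ◁ h ≫ (α_ _ _ _).inv ≫ r.θ Y ▷ Z) : g = h := by
  let _ := pairR Z
  apply (tensorRightHomEquiv W (dual Z) Z r.R).symm.injective
  apply r.ext
  intro Y
  rw [← cancel_epi (α_ _ _ _).hom, ← symm_fact, ← symm_fact, e]

theorem exZ {W Z : C} (t : ∀ Y, Y ⊗ W ⟶ (X ⊗ Y) ⊗ Z)
    (nat : ∀ {Y Y' : C} (f : Y ⟶ Y'), f ▷ W ≫ t Y' = t Y ≫ (X ◁ f) ▷ Z) :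
    ∃ h : W ⟶ r.R ⊗ Z, ∀ Y, Y ◁ h ≫ (α_ _ _ _).inv ≫ r.θ Y ▷ Z = t Y := by
  let _ := pairR Z
  obtain ⟨h, hh⟩ := r.ex (W := W ⊗ dual Z)
    (fun Y => (α_ _ _ _).inv ≫ (tensorRightHomEquiv (Y ⊗ W) (dual Z) Z (X ⊗ Y)).symm (t Y)) (by
      intro Y Y' f
      simp only [tensorRightHomEquiv, Equiv.coe_fn_symm_mk]
      have := congrArg (fun a => a ▷ dual Z) (nat f)
      simp only [comp_whiskerRight] at this
      simp only [associator_inv_naturality_left_assoc, reassoc_of% this, Category.assoc]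
      calc _ = 𝟙 _ ⊗≫ t Y ▷ dual Z ⊗≫ ((X ◁ f) ▷ (Z ⊗ dual Z) ≫ (X ⊗ Y') ◁ ε_ (dual Z) Z) ⊗≫ 𝟙 _ := by monoidal
        _ = _ := by rw [← whisker_exchange]; monoidal)
  refine ⟨tensorRightHomEquiv W (dual Z) Z r.R h, fun Y => ?_⟩
  apply (tensorRightHomEquiv (Y ⊗ W) (dual Z) Z (X ⊗ Y)).symm.injective
  rw [symm_fact, Equiv.symm_apply_apply, hh]
  simp

theorem exists_half : ∃ b : HalfBraiding r.R, ∀ Y Z, Y ◁ (b.β Z).inv ≫ (α_ _ _ _).inv ≫ r.θ Y ▷ Z =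
    (α_ _ _ _).inv ≫ r.θ (Y ⊗ Z) ≫ (α_ _ _ _).inv := by
  choose τ hτ using fun Z => r.exZ (Z := Z) (fun Y => (α_ Y Z r.R).inv ≫ r.θ (Y ⊗ Z) ≫ (α_ X Y Z).inv) (by
    intro Y Y' f
    simp only [associator_inv_naturality_left_assoc]
    rw [reassoc_of% (r.nat (f ▷ Z))]
    simp)
  obtain ⟨b, hb⟩ := halfBraiding_of_inv r.R τ (by
      intro Z Z' f
      apply r.extZ
      intro Y
      simp only [MonoidalCategory.whiskerLeft_comp, Category.assoc, hτ]
      have := r.nat (Y ◁ f)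
      calc _ = (α_ _ _ _).inv ≫ ((Y ◁ f) ▷ r.R ≫ r.θ (Y ⊗ Z')) ≫ (α_ _ _ _).inv := by simp
        _ = ((α_ _ _ _).inv ≫ r.θ (Y ⊗ Z) ≫ (α_ _ _ _).inv) ≫ (X ⊗ Y) ◁ f := by rw [this]; simp
        _ = _ := by
          rw [← hτ]
          simp only [Category.assoc, ← whisker_exchange]
          simp)
    (by
      intro Z Z'
      apply r.extZ
      intro Y
      rw [hτ]
      symm
      calc _ = 𝟙 _ ⊗≫ Y ◁ Z ◁ τ Z' ⊗≫ (Y ◁ τ Z ≫ (α_ _ _ _).inv ≫ r.θ Y ▷ Z) ▷ Z' ⊗≫ 𝟙 _ := by monoidal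
        _ = 𝟙 _ ⊗≫ ((Y ⊗ Z) ◁ τ Z' ≫ (α_ _ _ _).inv ≫ r.θ (Y ⊗ Z) ▷ Z') ⊗≫ 𝟙 _ := by rw [hτ]; monoidal
        _ = 𝟙 _ ⊗≫ ((α_ Y Z Z').inv ▷ r.R ≫ r.θ ((Y ⊗ Z) ⊗ Z')) ⊗≫ 𝟙 _ := by rw [hτ]; monoidal
        _ = _ := by rw [r.nat]; monoidal)
    (by
      apply r.extZ
      intro Y
      rw [hτ]
      calc _ = 𝟙 _ ⊗≫ (r.θ (Y ⊗ 𝟙_ C) ≫ X ◁ (ρ_ Y).hom) ⊗≫ 𝟙 _ := by monoidal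
        _ = _ := by rw [← r.nat]; monoidal)
  refine ⟨b, fun Y Z => ?_⟩
  rw [hb, hτ]

/-- The half braiding on `R X`. -/
noncomputable def b : HalfBraiding r.R := r.exists_half.choose

theorem b_spec (Y Z : C) : Y ◁ (r.b.β Z).inv ≫ (α_ _ _ _).inv ≫ r.θ Y ▷ Z =
    (α_ _ _ _).inv ≫ r.θ (Y ⊗ Z) ≫ (α_ _ _ _).inv := r.exists_half.choose_spec Y Z

/-- The central object on `R X`. -/
noncomputable def Z : Center C := ⟨r.R, r.b⟩

/-- counit -/
def ε : r.R ⟶ X := (λ_ _).inv ≫ r.θ (𝟙_ C) ≫ (ρ_ _).hom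

theorem inv_nat {A : C} (b : HalfBraiding A) {Y Y' : C} (f : Y ⟶ Y') :
    f ▷ A ≫ (b.β Y').inv = (b.β Y).inv ≫ A ◁ f := by
  rw [Iso.comp_inv_eq, Category.assoc, b.naturality, Iso.inv_hom_id_assoc]

theorem inv_mon {A : C} (b : HalfBraiding A) (Y Y' : C) :
    (b.β (Y ⊗ Y')).inv = (α_ _ _ _).hom ≫ Y ◁ (b.β Y').inv ≫ (α_ _ _ _).inv ≫
      (b.β Y).inv ▷ Y' ≫ (α_ _ _ _).hom := by
  rw [← cancel_epi (b.β (Y ⊗ Y')).hom, Iso.hom_inv_id, b.monoidal]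
  simp

theorem inv_unit {A : C} (b : HalfBraiding A) :
    (b.β (𝟙_ C)).inv = (λ_ _).hom ≫ (ρ_ _).inv := by
  have e := inv_mon b (𝟙_ C) (𝟙_ C)
  have e1 := inv_nat b (λ_ (𝟙_ C)).hom
  rw [e] at e1
  have e2 : (b.β (𝟙_ C)).inv ≫ 𝟙 _ = (b.β (𝟙_ C)).inv ≫ ((ρ_ _).hom ≫ (λ_ _).inv ≫ (b.β (𝟙_ C)).inv) := by
    calc _ = 𝟙 _ ⊗≫ ((λ_ (𝟙_ C)).hom ▷ A ≫ (b.β (𝟙_ C)).inv) := by monoidal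
      _ = _ := by rw [e1]; monoidal
  rw [cancel_epi] at e2
  calc _ = ((λ_ _).hom ≫ (ρ_ _).inv) ≫ ((ρ_ _).hom ≫ (λ_ _).inv ≫ (b.β (𝟙_ C)).inv) := by simp
    _ = _ := by rw [← e2]; simp

theorem hom_unit {A : C} (b : HalfBraiding A) :
    (b.β (𝟙_ C)).hom = (ρ_ _).hom ≫ (λ_ _).inv := by
  rw [← cancel_mono (b.β (𝟙_ C)).inv, Iso.hom_inv_id, inv_unit]
  simp

theorem θ_eq (Y : C) : r.θ Y = (r.b.β Y).inv ≫ r.ε ▷ Y := by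
  have := r.b_spec (𝟙_ C) Y
  have h2 := r.nat (λ_ Y).hom
  calc _ = 𝟙 _ ⊗≫ ((λ_ Y).hom ▷ r.R ≫ r.θ Y) := by monoidal
    _ = 𝟙 _ ⊗≫ ((α_ _ _ _).inv ≫ r.θ (𝟙_ C ⊗ Y) ≫ (α_ _ _ _).inv) ⊗≫ 𝟙 _ := by rw [h2]; monoidal
    _ = _ := by rw [← this, ε]; monoidal

theorem exists_lift' {A : C} (a : HalfBraiding A) (f : A ⟶ X) :
    ∃ h : A ⟶ r.R, (∀ U, U ◁ h ≫ (r.b.β U).inv = (a.β U).inv ≫ h ▷ U) ∧ h ≫ r.ε = f := by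
  obtain ⟨h, hh⟩ := r.ex (W := A) (fun Y => (a.β Y).inv ≫ f ▷ Y) (by
    intro Y Y' g
    rw [reassoc_of% (inv_nat a g), Category.assoc, whisker_exchange])
  refine ⟨h, ?_, ?_⟩
  · intro U
    apply r.extZ
    intro Y
    rw [MonoidalCategory.whiskerLeft_comp, Category.assoc, b_spec]
    calc _ = 𝟙 _ ⊗≫ ((Y ⊗ U) ◁ h ≫ r.θ (Y ⊗ U)) ⊗≫ 𝟙 _ := by monoidal
      _ = 𝟙 _ ⊗≫ Y ◁ (a.β U).inv ⊗≫ ((a.β Y).inv ≫ f ▷ Y) ▷ U ⊗≫ 𝟙 _ := by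
        rw [hh, inv_mon]; monoidal
      _ = _ := by rw [← hh]; monoidal
  · have h1 := hh (𝟙_ C)
    rw [inv_unit] at h1
    calc _ = 𝟙 _ ⊗≫ (𝟙_ C ◁ h ≫ r.θ (𝟙_ C)) ⊗≫ 𝟙 _ := by rw [ε]; monoidal
      _ = _ := by rw [h1]; monoidal

/-- Central morphisms. -/
def _root_.CoendPf.IsC {A B : C} (a : HalfBraiding A) (b : HalfBraiding B) (g : A ⟶ B) : Prop :=
  ∀ U, g ▷ U ≫ (b.β U).hom = (a.β U).hom ≫ U ◁ g

theorem exists_lift {A : C} (a : HalfBraiding A) (f : A ⟶ X) :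
    ∃ h : A ⟶ r.R, IsC a r.b h ∧ h ≫ r.ε = f := by
  obtain ⟨h, h1, h2⟩ := r.exists_lift' a f
  refine ⟨h, fun U => ?_, h2⟩
  have := h1 U
  rw [Iso.comp_inv_eq, Category.assoc, Iso.eq_inv_comp] at this
  exact this.symm

theorem lift_ext {A : C} (a : HalfBraiding A) {g h : A ⟶ r.R} (hg : IsC a r.b g) (hh : IsC a r.b h)
    (e : g ≫ r.ε = h ≫ r.ε) : g = h := by
  have key : ∀ (g : A ⟶ r.R), IsC a r.b g → ∀ (Y : C), Y ◁ g ≫ r.θ Y = (a.β Y).inv ≫ (g ≫ r.ε) ▷ Y := by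
    intro g hg Y
    rw [Iso.eq_inv_comp, θ_eq, comp_whiskerRight]
    rw [← reassoc_of% (hg Y)]
    simp
  apply r.ext
  intro Y
  rw [key g hg, key h hh, e]

end
end RData

section
variable {C : Type u} [Category.{v} C] [MonoidalCategory C] 
theorem IsC.comp {A B D : C} {a : HalfBraiding A} {b : HalfBraiding B} {d : HalfBraiding D}
    {f : A ⟶ B} {g : B ⟶ D} (hf : IsC a b f) (hg : IsC b d g) : IsC a d (f ≫ g) := by
  intro U
  rw [comp_whiskerRight, Category.assoc, hg, reassoc_of% (hf U), MonoidalCategory.whiskerLeft_comp]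

theorem IsC.id {A : C} (a : HalfBraiding A) : IsC a a (𝟙 A) := by
  intro U; simp
end
end CoendPf


namespace CoendPf
open PivotalCat ExactPairing
section
variable {C : Type u} [Category.{v} C] [MonoidalCategory C] [PivotalCat C]
variable (r : ∀ X : C, RData X)

/-- functoriality of R -/
noncomputable def Rm {X Y : C} (f : X ⟶ Y) : (r X).R ⟶ (r Y).R :=
  ((r Y).exists_lift (r X).b ((r X).ε ≫ f)).choose

theorem Rm_isC {X Y : C} (f : X ⟶ Y) : IsC (r X).b (r Y).b (Rm r f) :=
  ((r Y).exists_lift (r X).b ((r X).ε ≫ f)).choose_spec.1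

theorem Rm_ε {X Y : C} (f : X ⟶ Y) : Rm r f ≫ (r Y).ε = (r X).ε ≫ f :=
  ((r Y).exists_lift (r X).b ((r X).ε ≫ f)).choose_spec.2

theorem Rm_θ {X X' : C} (f : X ⟶ X') (Y : C) : Y ◁ Rm r f ≫ (r X').θ Y = (r X).θ Y ≫ f ▷ Y := by
  rw [RData.θ_eq, RData.θ_eq, Category.assoc, Iso.eq_inv_comp, ← reassoc_of% (Rm_isC r f Y)]
  rw [Iso.hom_inv_id_assoc, ← comp_whiskerRight, ← comp_whiskerRight, Rm_ε]

/-- The functor U R. -/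
noncomputable def Rf : C ⥤ C where
  obj X := (r X).R
  map f := Rm r f
  map_id X := by
    apply (r X).ext; intro Y; rw [Rm_θ]; simp
  map_comp {X Y Z} f g := by
    apply (r Z).ext; intro W; rw [Rm_θ, MonoidalCategory.whiskerLeft_comp, Category.assoc, Rm_θ, reassoc_of% (Rm_θ r f)]; simp

theorem Rm_add [Preadditive C] [MonoidalPreadditive C] {X Y : C} (f g : X ⟶ Y) :
    Rm r (f + g) = Rm r f + Rm r g := by
  apply (r Y).ext; intro W
  simp only [MonoidalPreadditive.whiskerLeft_add, Preadditive.add_comp, Rm_θ, MonoidalPreadditive.add_whiskerRight, Preadditive.comp_add]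

theorem Rm_smul (k : Type w) [CommRing k] [Preadditive C] [Linear k C] [MonoidalPreadditive C] [MonoidalLinear k C]
    {X Y : C} (f : X ⟶ Y) (a : k) : Rm r (a • f) = a • Rm r f := by
  apply (r Y).ext; intro W
  simp only [MonoidalLinear.whiskerLeft_smul, Linear.smul_comp, Rm_θ, MonoidalLinear.smul_whiskerRight, Linear.comp_smul]

instance [Preadditive C] [MonoidalPreadditive C] : (Rf r).Additive where
  map_add := Rm_add r _ _

instance (k : Type w) [CommRing k] [Preadditive C] [Linear k C] [MonoidalPreadditive C] [MonoidalLinear k C] : (Rf r).Linear k where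
  map_smul f a := Rm_smul r k f a

/-- unit -/
noncomputable def ηm {A : C} (a : HalfBraiding A) : A ⟶ (r A).R :=
  ((r A).exists_lift a (𝟙 A)).choose
theorem η_isC {A : C} (a : HalfBraiding A) : IsC a (r A).b (ηm r a) :=
  ((r A).exists_lift a (𝟙 A)).choose_spec.1
theorem η_ε {A : C} (a : HalfBraiding A) : ηm r a ≫ (r A).ε = 𝟙 A :=
  ((r A).exists_lift a (𝟙 A)).choose_spec.2

theorem η_nat {A B : C} {a : HalfBraiding A} {b : HalfBraiding B} {f : A ⟶ B} (hf : IsC a b f) :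
    f ≫ ηm r b = ηm r a ≫ Rm r f := by
  apply (r B).lift_ext a (hf.comp (η_isC r b)) ((η_isC r a).comp (Rm_isC r f))
  rw [Category.assoc, Category.assoc, Rm_ε, η_ε, reassoc_of% (η_ε r a), Category.comp_id]

theorem η_R (X : C) : ηm r (r X).b ≫ Rm r (r X).ε = 𝟙 _ := by
  apply (r X).lift_ext (r X).b ((η_isC r _).comp (Rm_isC r _)) (IsC.id _)
  rw [Category.assoc, Rm_ε, reassoc_of% (η_ε r (r X).b), Category.id_comp]

end
end CoendPf


namespace CoendPf
open PivotalCat ExactPairing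

/-- Universal natural family `A ⟶ A ⊗ C0` over half braidings. -/
structure EData (C : Type u) [Category.{v} C] [MonoidalCategory C] where
  C0 : C
  e : ∀ {A : C} (_ : HalfBraiding A), A ⟶ A ⊗ C0
  nat : ∀ {A B : C} {a : HalfBraiding A} {b : HalfBraiding B} {f : A ⟶ B}, IsC a b f →
    f ≫ e b = e a ≫ f ▷ C0
  ex : ∀ {E : C} (t : ∀ {A : C} (_ : HalfBraiding A), A ⟶ A ⊗ E),
    (∀ {A B : C} {a : HalfBraiding A} {b : HalfBraiding B} {f : A ⟶ B}, IsC a b f →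
      f ≫ t b = t a ≫ f ▷ E) → ∃ φ : C0 ⟶ E, ∀ {A : C} (a : HalfBraiding A), e a ≫ A ◁ φ = t a
  ext : ∀ {E : C} {g h : C0 ⟶ E}, (∀ {A : C} (a : HalfBraiding A), e a ≫ A ◁ g = e a ≫ A ◁ h) → g = h

section
variable (k : Type w) [CommRing k] {C : Type u}
    [Category.{v} C] [Preadditive C] [CategoryTheory.Linear k C] [MonoidalCategory C]
    [MonoidalPreadditive C] [CategoryTheory.MonoidalLinear k C]
    [CategoryTheory.Limits.HasFiniteBiproducts C] [PivotalCat C] [MonoidalKCat k C]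
    [PreFusionCat k C]
    {I : Finset C} (hI : IsRepresentativeSet k C ↑I)
include hI

theorem R_unique (r : ∀ X : C, RData X) {W : C} (s t : ∀ X, (r X).R ⟶ X ⊗ W)
    (hs : ∀ {X Y : C} (f : X ⟶ Y), Rm r f ≫ s Y = s X ≫ f ▷ W)
    (ht : ∀ {X Y : C} (f : X ⟶ Y), Rm r f ≫ t Y = t X ≫ f ▷ W)
    (h : ∀ i : I, s i.1 = t i.1) (X : C) : s X = t X := by
  have := nat_ext_unique k hI (P := Rf r) (Q := tensorRight W)
      (s := { app := s, naturality := fun Y Y' f => hs f })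
      (t := { app := t, naturality := fun Y Y' f => ht f }) h
  exact congrArg (fun s => s.app X) this

theorem R_exists (r : ∀ X : C, RData X) {W : C} (t : ∀ i : I, (r i.1).R ⟶ i.1 ⊗ W) :
    ∃ s : ∀ X, (r X).R ⟶ X ⊗ W, (∀ {X Y : C} (f : X ⟶ Y), Rm r f ≫ s Y = s X ≫ f ▷ W) ∧
      ∀ i : I, s i.1 = t i := by
  obtain ⟨s, hs⟩ := nat_ext_exists k hI (P := Rf r) (Q := tensorRight W) t
  exact ⟨s.app, fun f => s.naturality f, hs⟩

theorem exists_E (r : ∀ X : C, RData X) :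
    ∃ E : EData C, E.C0 = ⨁ fun i : I => dual i.1 ⊗ (r i.1).R := by
  let _ (j : I) := pairL j.1
  let F : I → C := fun i : I => dual i.1 ⊗ (r i.1).R
  obtain ⟨s, hnat, hs⟩ := R_exists k hI r
    (fun j => tensorLeftHomEquiv (r j.1).R j.1 (dual j.1) (⨁ F) (biproduct.ι F j))
  have key : ∀ {W : C} (h : ⨁ F ⟶ W) (j : I), s j.1 ≫ j.1 ◁ h =
      tensorLeftHomEquiv (r j.1).R j.1 (dual j.1) W (biproduct.ι F j ≫ h) := by
    intro W h j
    rw [hs, tensorLeftHomEquiv_naturality]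
  have sext : ∀ {W : C} {g h : ⨁ F ⟶ W}, (∀ X, s X ≫ X ◁ g = s X ≫ X ◁ h) → g = h := by
    intro W g h e
    apply biproduct.hom_ext'
    intro j
    have := e j.1
    rw [key, key] at this
    exact (Equiv.injective _) this
  have sex : ∀ {W : C} (t : ∀ X, (r X).R ⟶ X ⊗ W),
      (∀ {X Y : C} (f : X ⟶ Y), Rm r f ≫ t Y = t X ≫ f ▷ W) → ∃ φ : ⨁ F ⟶ W, ∀ X, s X ≫ X ◁ φ = t X := by
    intro W t ht
    let φ : ⨁ F ⟶ W := biproduct.desc fun j => (tensorLeftHomEquiv (r j.1).R j.1 (dual j.1) W).symm (t j.1)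
    refine ⟨φ, fun Y => ?_⟩
    refine R_unique k hI r (fun Y => s Y ≫ Y ◁ φ) t ?_ ht ?_ Y
    · intro X Y f
      rw [reassoc_of% (hnat f), Category.assoc, whisker_exchange]
    · intro i
      rw [key, ← Equiv.eq_symm_apply]
      exact biproduct.ι_desc _ _
  refine ⟨⟨⨁ F, fun {A} a => ηm r a ≫ s A, ?_, ?_, ?_⟩, rfl⟩
  · intro A B a b f hf
    rw [reassoc_of% (η_nat r hf), hnat, Category.assoc]
  · intro E t ht
    obtain ⟨φ, hφ⟩ := sex (fun X => t (r X).b ≫ (r X).ε ▷ E) (by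
      intro X Y f
      rw [reassoc_of% (ht (Rm_isC r f)), Category.assoc, ← comp_whiskerRight, ← comp_whiskerRight,
        Rm_ε])
    refine ⟨φ, fun {A} a => ?_⟩
    have h1 := hφ A
    have h2 := ht (η_isC r a)
    change (ηm r a ≫ s A) ≫ A ◁ φ = t a
    rw [Category.assoc, h1, reassoc_of% h2, ← comp_whiskerRight, η_ε, id_whiskerRight, Category.comp_id]
  · intro E g h e
    apply sext
    intro X
    have h1 := e (r X).b
    have h2 : s X = ηm r (r X).b ≫ s (r X).R ≫ (r X).ε ▷ (⨁ F) := by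
      rw [← hnat, reassoc_of% (η_R r X)]
    have h3 : ∀ φ : ⨁ F ⟶ E, s X ≫ X ◁ φ =
        ((ηm r (r X).b ≫ s (r X).R) ≫ (r X).R ◁ φ) ≫ (r X).ε ▷ E := by
      intro φ
      rw [h2]
      simp only [Category.assoc]
      rw [← whisker_exchange]
    rw [h3, h3, h1]

end
end CoendPf


namespace CoendPf
open PivotalCat ExactPairing
namespace EData
section
variable {C : Type u} [Category.{v} C] [MonoidalCategory C] [PivotalCat C] (E : EData C)

theorem factX {A X X' W : C} (a : HalfBraiding A) [ExactPairing X X'] (g : E.C0 ⊗ X ⟶ W) :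
    tensorRightHomEquiv A X X' (A ⊗ W) (E.e a ▷ X ≫ (α_ _ _ _).hom ≫ A ◁ g) =
      E.e a ≫ A ◁ tensorRightHomEquiv E.C0 X X' W g ≫ (α_ _ _ _).inv := by
  simp only [tensorRightHomEquiv, Equiv.coe_fn_mk]
  calc _ = 𝟙 _ ⊗≫ (A ◁ η_ X X' ≫ E.e a ▷ (X ⊗ X')) ⊗≫ A ◁ g ▷ X' ⊗≫ 𝟙 _ := by monoidal
    _ = _ := by rw [whisker_exchange]; monoidal

theorem extX {X W : C} {g h : E.C0 ⊗ X ⟶ W}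
    (H : ∀ {A : C} (a : HalfBraiding A), E.e a ▷ X ≫ (α_ _ _ _).hom ≫ A ◁ g =
      E.e a ▷ X ≫ (α_ _ _ _).hom ≫ A ◁ h) : g = h := by
  let _ := pairL X
  apply (tensorRightHomEquiv E.C0 X (dual X) W).injective
  apply E.ext
  intro A a
  rw [← cancel_mono (α_ _ _ _).inv, Category.assoc, Category.assoc, ← factX, ← factX, H]

theorem exX {X W : C} (t : ∀ {A : C} (_ : HalfBraiding A), A ⊗ X ⟶ A ⊗ W)
    (ht : ∀ {A B : C} {a : HalfBraiding A} {b : HalfBraiding B} {f : A ⟶ B}, IsC a b f →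
      f ▷ X ≫ t b = t a ≫ f ▷ W) :
    ∃ φ : E.C0 ⊗ X ⟶ W, ∀ {A : C} (a : HalfBraiding A),
      E.e a ▷ X ≫ (α_ _ _ _).hom ≫ A ◁ φ = t a := by
  let _ := pairL X
  obtain ⟨φ, hφ⟩ := E.ex (E := W ⊗ dual X)
    (fun {A} a => tensorRightHomEquiv A X (dual X) (A ⊗ W) (t a) ≫ (α_ _ _ _).hom) (by
      intro A B a b f hf
      simp only [tensorRightHomEquiv, Equiv.coe_fn_mk]
      calc _ = 𝟙 _ ⊗≫ (f ▷ 𝟙_ C ≫ B ◁ η_ X (dual X)) ⊗≫ t b ▷ dual X ⊗≫ 𝟙 _ := by monoidal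
        _ = 𝟙 _ ⊗≫ A ◁ η_ X (dual X) ⊗≫ (f ▷ X ≫ t b) ▷ dual X ⊗≫ 𝟙 _ := by
          rw [← whisker_exchange]; monoidal
        _ = _ := by rw [ht hf]; monoidal)
  refine ⟨(tensorRightHomEquiv E.C0 X (dual X) W).symm φ, fun {A} a => ?_⟩
  apply (tensorRightHomEquiv A X (dual X) (A ⊗ W)).injective
  rw [factX, Equiv.apply_symm_apply, reassoc_of% (hφ a)]
  simp

theorem exists_half : ∃ b : HalfBraiding E.C0, ∀ {A : C} (a : HalfBraiding A) (X : C),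
    E.e a ▷ X ≫ (α_ _ _ _).hom ≫ A ◁ (b.β X).hom =
      (a.β X).hom ≫ X ◁ E.e a ≫ (α_ _ _ _).inv ≫ (a.β X).inv ▷ E.C0 ≫ (α_ _ _ _).hom := by
  choose σ hσ using fun X => E.exX (X := X) (fun {A} a => (a.β X).hom ≫ X ◁ E.e a ≫
      (α_ _ _ _).inv ≫ (a.β X).inv ▷ E.C0 ≫ (α_ _ _ _).hom) (by
    intro A B a b f hf
    have h2 : X ◁ f ≫ (b.β X).inv = (a.β X).inv ≫ f ▷ X := by
      rw [Iso.comp_inv_eq, Category.assoc, hf, Iso.inv_hom_id_assoc]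
    rw [reassoc_of% (hf X), ← MonoidalCategory.whiskerLeft_comp_assoc, E.nat hf]
    calc _ = 𝟙 _ ⊗≫ (a.β X).hom ⊗≫ X ◁ E.e a ⊗≫ (X ◁ f ≫ (b.β X).inv) ▷ E.C0 ⊗≫ 𝟙 _ := by
          monoidal
      _ = _ := by rw [h2]; monoidal)
  obtain ⟨b, hb⟩ := halfBraiding_of_hom E.C0 σ (by
      intro Z Z' f
      apply E.extX
      intro A a
      calc _ = 𝟙 _ ⊗≫ (E.e a ▷ Z ≫ (A ⊗ E.C0) ◁ f) ⊗≫ A ◁ σ Z' := by monoidal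
        _ = A ◁ f ≫ E.e a ▷ Z' ≫ (α_ _ _ _).hom ≫ A ◁ σ Z' := by
          rw [← whisker_exchange]; monoidal
        _ = (A ◁ f ≫ (a.β Z').hom) ⊗≫ Z' ◁ E.e a ⊗≫ (a.β Z').inv ▷ E.C0 ⊗≫ 𝟙 _ := by
          rw [hσ]; monoidal
        _ = (a.β Z).hom ⊗≫ (f ▷ A ≫ Z' ◁ E.e a) ⊗≫ (a.β Z').inv ▷ E.C0 ⊗≫ 𝟙 _ := by
          rw [a.naturality]; monoidal
        _ = (a.β Z).hom ⊗≫ Z ◁ E.e a ⊗≫ (f ▷ A ≫ (a.β Z').inv) ▷ E.C0 ⊗≫ 𝟙 _ := by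
          rw [← whisker_exchange]; monoidal
        _ = ((a.β Z).hom ≫ Z ◁ E.e a ≫
              (α_ _ _ _).inv ≫ (a.β Z).inv ▷ E.C0 ≫ (α_ _ _ _).hom) ≫ A ◁ f ▷ E.C0 := by
          rw [RData.inv_nat]; monoidal
        _ = _ := by rw [← hσ]; simp)
    (by
      intro Z Z'
      apply E.extX
      intro A a
      rw [hσ]
      symm
      calc _ = 𝟙 _ ⊗≫ (E.e a ▷ Z ≫ (α_ _ _ _).hom ≫ A ◁ σ Z) ▷ Z' ⊗≫ (A ⊗ Z) ◁ σ Z' ⊗≫ 𝟙 _ := by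
            monoidal
        _ = 𝟙 _ ⊗≫ (a.β Z).hom ▷ Z' ⊗≫ Z ◁ E.e a ▷ Z' ⊗≫
            ((a.β Z).inv ▷ (E.C0 ⊗ Z') ≫ (A ⊗ Z) ◁ σ Z') ⊗≫ 𝟙 _ := by rw [hσ]; monoidal
        _ = 𝟙 _ ⊗≫ (a.β Z).hom ▷ Z' ⊗≫ Z ◁ (E.e a ▷ Z' ≫ (α_ _ _ _).hom ≫ A ◁ σ Z') ⊗≫
            ((a.β Z).inv ▷ Z') ▷ E.C0 ⊗≫ 𝟙 _ := by rw [← whisker_exchange]; monoidal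
        _ = _ := by rw [hσ, a.monoidal, RData.inv_mon]; monoidal)
    (by
      apply E.extX
      intro A a
      rw [hσ, RData.inv_unit, RData.hom_unit]
      monoidal)
  refine ⟨b, fun a X => ?_⟩
  rw [hb, hσ]

/-- The half braiding on the coend. -/
noncomputable def b : HalfBraiding E.C0 := E.exists_half.choose

theorem b_spec {A : C} (a : HalfBraiding A) (X : C) :
    E.e a ▷ X ≫ (α_ _ _ _).hom ≫ A ◁ (E.b.β X).hom =
      (a.β X).hom ≫ X ◁ E.e a ≫ (α_ _ _ _).inv ≫ (a.β X).inv ▷ E.C0 ≫ (α_ _ _ _).hom :=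
  E.exists_half.choose_spec a X

theorem e_central {A : C} (a : HalfBraiding A) (U : C) :
    E.e a ▷ U ≫ (α_ _ _ _).hom ≫ A ◁ (E.b.β U).hom ≫ (α_ _ _ _).inv ≫ (a.β U).hom ▷ E.C0 ≫
      (α_ _ _ _).hom = (a.β U).hom ≫ U ◁ E.e a := by
  have := E.b_spec a U
  have h2 := congrArg (fun x => x ≫ (α_ _ _ _).inv ≫ (a.β U).hom ▷ E.C0 ≫ (α_ _ _ _).hom) this
  simpa using h2

theorem φ_central {W : C} (w : HalfBraiding W) (t : ∀ {A : C} (_ : HalfBraiding A), A ⟶ A ⊗ W)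
    (ht : ∀ {A : C} (a : HalfBraiding A) (U : C),
      t a ▷ U ≫ (α_ _ _ _).hom ≫ A ◁ (w.β U).hom ≫ (α_ _ _ _).inv ≫ (a.β U).hom ▷ W ≫
      (α_ _ _ _).hom = (a.β U).hom ≫ U ◁ t a)
    (φ : E.C0 ⟶ W) (hφ : ∀ {A : C} (a : HalfBraiding A), E.e a ≫ A ◁ φ = t a) :
    IsC E.b w φ := by
  intro U
  apply E.extX
  intro A a
  have h1 : t a ▷ U ≫ (α_ _ _ _).hom ≫ A ◁ (w.β U).hom =
      (a.β U).hom ≫ U ◁ t a ≫ (α_ _ _ _).inv ≫ (a.β U).inv ▷ W ≫ (α_ _ _ _).hom := by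
    rw [← reassoc_of% (ht a U)]; simp
  calc _ = (E.e a ≫ A ◁ φ) ▷ U ≫ (α_ _ _ _).hom ≫ A ◁ (w.β U).hom := by simp
    _ = (a.β U).hom ≫ U ◁ (E.e a ≫ A ◁ φ) ≫ (α_ _ _ _).inv ≫ (a.β U).inv ▷ W ≫ (α_ _ _ _).hom := by
      rw [hφ, h1]
    _ = (a.β U).hom ⊗≫ U ◁ E.e a ⊗≫ ((U ⊗ A) ◁ φ ≫ (a.β U).inv ▷ W) ⊗≫ 𝟙 _ := by monoidal
    _ = ((a.β U).hom ≫ U ◁ E.e a ≫ (α_ _ _ _).inv ≫ (a.β U).inv ▷ E.C0 ≫ (α_ _ _ _).hom) ≫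
        A ◁ U ◁ φ := by rw [whisker_exchange]; monoidal
    _ = _ := by rw [← E.b_spec]; simp

end
end EData
end CoendPf


namespace CoendPf
open PivotalCat ExactPairing

section
variable {D : Type u} [Category.{v} D] [MonoidalCategory D] 

theorem nat_iff {M N W : D} [HasRightDual M] [HasRightDual N] (f : M ⟶ N)
    (dM : Mᘁ ⊗ M ⟶ W) (dN : Nᘁ ⊗ N ⟶ W) :
    (fᘁ ▷ M ≫ dM = Nᘁ ◁ f ≫ dN) ↔
      f ≫ tensorLeftHomEquiv N N Nᘁ W dN = tensorLeftHomEquiv M M Mᘁ W dM ≫ f ▷ W := by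
  have h1 : tensorLeftHomEquiv M N Nᘁ W (fᘁ ▷ M ≫ dM) = tensorLeftHomEquiv M M Mᘁ W dM ≫ f ▷ W := by
    simp only [tensorLeftHomEquiv, Equiv.coe_fn_mk]
    calc _ = 𝟙 _ ⊗≫ (η_ N Nᘁ ≫ N ◁ (rightAdjointMate f)) ▷ M ⊗≫ N ◁ dM := by monoidal
      _ = 𝟙 _ ⊗≫ η_ M Mᘁ ▷ M ⊗≫ (f ▷ (Mᘁ ⊗ M) ≫ N ◁ dM) := by
        rw [coevaluation_comp_rightAdjointMate]; monoidal
      _ = _ := by rw [← whisker_exchange]; monoidal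
  have h2 : tensorLeftHomEquiv M N Nᘁ W (Nᘁ ◁ f ≫ dN) = f ≫ tensorLeftHomEquiv N N Nᘁ W dN := by
    simp only [tensorLeftHomEquiv, Equiv.coe_fn_mk]
    calc _ = 𝟙 _ ⊗≫ (η_ N Nᘁ ▷ M ≫ (N ⊗ Nᘁ) ◁ f) ⊗≫ N ◁ dN := by monoidal
      _ = _ := by rw [← whisker_exchange]; monoidal
  rw [← h1, ← h2, Equiv.apply_eq_iff_eq, eq_comm]

end

section
variable {C : Type u} [Category.{v} C] [MonoidalCategory C] [PivotalCat C]

theorem coevl_central (A U : C) (s : A ⊗ U ≅ U ⊗ A) :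
    coevl A ▷ U ≫ (α_ _ _ _).hom ≫ A ◁ dualBeta A U s ≫ (α_ _ _ _).inv ≫ s.hom ▷ dual A ≫
      (α_ _ _ _).hom = (λ_ U).hom ≫ (ρ_ U).inv ≫ U ◁ coevl A := by
  have z : coevl A ▷ A ≫ (α_ _ _ _).hom ≫ A ◁ evl A = (λ_ A).hom ≫ (ρ_ A).inv :=
    (pairL A).evaluation_coevaluation'
  rw [dualBeta]
  calc _ = 𝟙 _ ⊗≫ (coevl A ▷ (U ⊗ 𝟙_ C) ≫ (A ⊗ dual A) ◁ (U ◁ coevl A ≫ (α_ _ _ _).inv ≫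
          s.inv ▷ dual A)) ⊗≫ A ◁ evl A ▷ (U ⊗ dual A) ⊗≫ s.hom ▷ dual A ⊗≫ 𝟙 _ := by monoidal
    _ = 𝟙 _ ⊗≫ U ◁ coevl A ⊗≫ s.inv ▷ dual A ⊗≫
        (coevl A ▷ A ≫ (α_ _ _ _).hom ≫ A ◁ evl A) ▷ (U ⊗ dual A) ⊗≫ s.hom ▷ dual A ⊗≫ 𝟙 _ := by
      rw [← whisker_exchange]; monoidal
    _ = 𝟙 _ ⊗≫ U ◁ coevl A ⊗≫ (s.inv ≫ s.hom) ▷ dual A ⊗≫ 𝟙 _ := by rw [z]; monoidal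
    _ = _ := by rw [s.inv_hom_id]; monoidal

theorem evl_central (A U : C) (s : A ⊗ U ≅ U ⊗ A) :
    (α_ _ _ _).hom ≫ dual A ◁ s.hom ≫ (α_ _ _ _).inv ≫ dualBeta A U s ▷ A ≫ (α_ _ _ _).hom ≫
      U ◁ evl A = evl A ▷ U ≫ (λ_ U).hom ≫ (ρ_ U).inv := by
  have z : coevl A ▷ A ≫ (α_ _ _ _).hom ≫ A ◁ evl A = (λ_ A).hom ≫ (ρ_ A).inv :=
    (pairL A).evaluation_coevaluation'
  rw [dualBeta]
  calc _ = 𝟙 _ ⊗≫ dual A ◁ s.hom ⊗≫ dual A ◁ U ◁ coevl A ▷ A ⊗≫ dual A ◁ s.inv ▷ (dual A ⊗ A) ⊗≫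
        (evl A ▷ (U ⊗ (dual A ⊗ A)) ≫ 𝟙_ C ◁ (U ◁ evl A)) ⊗≫ 𝟙 _ := by monoidal
    _ = 𝟙 _ ⊗≫ dual A ◁ s.hom ⊗≫ dual A ◁ U ◁ coevl A ▷ A ⊗≫
        dual A ◁ (s.inv ▷ (dual A ⊗ A) ≫ (A ⊗ U) ◁ evl A) ⊗≫ evl A ▷ U ⊗≫ 𝟙 _ := by
      rw [← whisker_exchange]; monoidal
    _ = 𝟙 _ ⊗≫ dual A ◁ s.hom ⊗≫
        dual A ◁ U ◁ (coevl A ▷ A ≫ (α_ _ _ _).hom ≫ A ◁ evl A) ⊗≫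
        dual A ◁ (s.inv ▷ 𝟙_ C) ⊗≫ evl A ▷ U ⊗≫ 𝟙 _ := by
      rw [← whisker_exchange]; monoidal
    _ = 𝟙 _ ⊗≫ dual A ◁ (s.hom ≫ s.inv) ⊗≫ evl A ▷ U ⊗≫ 𝟙 _ := by rw [z]; monoidal
    _ = _ := by rw [s.hom_inv_id]; monoidal

theorem exists_pair (M D : Center C) (h : D.1 = dual M.1) (hβ : ∀ X : C, (D.2.β X).hom =
        (eqToHom h ▷ X) ≫ dualBeta M.1 X (M.2.β X) ≫ (X ◁ eqToHom h.symm)) :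
    ∃ p : ExactPairing M D, p.coevaluation'.f = coevl M.1 ≫ M.1 ◁ eqToHom h.symm ∧
      p.evaluation'.f = eqToHom h ▷ M.1 ≫ evl M.1 := by
  obtain ⟨A, a⟩ := M
  obtain ⟨D, d⟩ := D
  dsimp only at h hβ
  subst h
  have hd : ∀ X, (d.β X).hom = dualBeta A X (a.β X) := by simpa using hβ
  let co : 𝟙_ (Center C) ⟶ (⟨A, a⟩ ⊗ ⟨dual A, d⟩ : Center C) := ⟨coevl A, fun U => by
    have := coevl_central A U (a.β U)
    rw [← hd, ← Category.assoc (λ_ U).hom] at this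
    exact this⟩
  let ev : (⟨dual A, d⟩ ⊗ ⟨A, a⟩ : Center C) ⟶ 𝟙_ (Center C) := ⟨evl A, fun U => by
    have := evl_central A U (a.β U)
    rw [← hd] at this
    have h2 : ((α_ _ _ _).hom ≫ dual A ◁ (a.β U).hom ≫ (α_ _ _ _).inv ≫ (d.β U).hom ▷ A ≫
      (α_ _ _ _).hom) ≫ U ◁ evl A = evl A ▷ U ≫ (λ_ U).hom ≫ (ρ_ U).inv := by
        simpa only [Category.assoc] using this
    exact h2.symm⟩
  refine ⟨⟨co, ev, ?_, ?_⟩, ?_, ?_⟩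
  · apply Center.ext
    refine Eq.trans ?_ ((pairL A).coevaluation_evaluation'.trans ?_)
    · exact congrArg (fun x => dual A ◁ coevl A ≫ x ≫ evl A ▷ dual A) (Center.associator_inv_f _ _ _)
    · exact congrArg (fun x => (ρ_ (dual A)).hom ≫ x) (Center.leftUnitor_inv_f ⟨dual A, d⟩).symm
  · apply Center.ext
    refine Eq.trans ?_ ((pairL A).evaluation_coevaluation'.trans ?_)
    · rfl
    · exact congrArg (fun x => (λ_ (A)).hom ≫ x) (Center.rightUnitor_inv_f ⟨A, a⟩).symm
  · simp [co]; rfl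
  · simp [ev]; rfl

theorem mate_aux {A B A' B' : C} (f : A ⟶ B) (hA : A' = dual A) (hB : B' = dual B) :
    (ρ_ B').inv ≫ B' ◁ (coevl A ≫ A ◁ eqToHom hA.symm) ≫ B' ◁ f ▷ A' ≫ (α_ _ _ _).inv ≫
      (eqToHom hB ▷ B ≫ evl B) ▷ A' ≫ (λ_ A').hom =
    eqToHom hB ≫ pdual f ≫ eqToHom hA.symm := by
  subst hA hB
  simp [pdual]

theorem mate_f {M N : Center C} [HasRightDual M] [HasRightDual N] (f : M ⟶ N)
    (hM : (Mᘁ).1 = dual M.1) (hN : (Nᘁ).1 = dual N.1)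
    (cM : (η_ M Mᘁ).f = coevl M.1 ≫ M.1 ◁ eqToHom hM.symm)
    (eN : (ε_ N Nᘁ).f = eqToHom hN ▷ N.1 ≫ evl N.1) :
    (fᘁ).f = eqToHom hN ≫ pdual f.f ≫ eqToHom hM.symm := by
  have h1 : (fᘁ).f = (ρ_ (Nᘁ).1).inv ≫ ((Nᘁ).1 ◁ (η_ M Mᘁ).f) ≫ ((Nᘁ).1 ◁ (f.f ▷ (Mᘁ).1)) ≫
    (α_ (Nᘁ).1 N.1 (Mᘁ).1).inv ≫ ((ε_ N Nᘁ).f ▷ (Mᘁ).1) ≫ (λ_ (Mᘁ).1).hom := by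
    have e1 := Center.rightUnitor_inv_f (Nᘁ)
    have e2 := Center.associator_inv_f (Nᘁ) N (Mᘁ)
    rw [← e1, ← e2]
    rfl
  rw [h1, cM, eN]
  exact mate_aux f.f hM hN
end
end CoendPf


namespace CoendPf
open PivotalCat ExactPairing

theorem exists_center {C : Type u} [Category.{v} C] [MonoidalCategory C] [PivotalCat C]
    (E : EData C) : ∃ (Cpt : Center C) (e : ∀ M : Center C, M ⟶ M ⊗ Cpt),
      (∀ {M N : Center C} (f : M ⟶ N), f ≫ e N = e M ≫ f ▷ Cpt) ∧
      (∀ (W : Center C) (t : ∀ M : Center C, M ⟶ M ⊗ W),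
        (∀ {M N : Center C} (f : M ⟶ N), f ≫ t N = t M ≫ f ▷ W) →
        ∃! φ : Cpt ⟶ W, ∀ M, e M ≫ M ◁ φ = t M) ∧ Cpt.1 = E.C0 := by
  refine ⟨⟨E.C0, E.b⟩, fun M => ⟨E.e M.2, fun U => E.e_central M.2 U⟩, ?_, ?_, rfl⟩
  · intro M N f
    apply Center.ext
    exact E.nat (a := M.2) (b := N.2) f.comm
  · intro W t ht
    let t' : ∀ {A : C} (_ : HalfBraiding A), A ⟶ A ⊗ W.1 := fun {A} a => (t ⟨A, a⟩).f
    obtain ⟨φ, hφ⟩ := E.ex t' (by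
      intro A B a b f hf
      exact congrArg Center.Hom.f (ht (M := ⟨A, a⟩) (N := ⟨B, b⟩) ⟨f, hf⟩))
    have hc : IsC E.b W.2 φ := E.φ_central W.2 t' (fun {A} a U => (t ⟨A, a⟩).comm U) φ hφ
    refine ⟨⟨φ, hc⟩, ?_, ?_⟩
    · intro M
      apply Center.ext
      exact hφ M.2
    · intro ψ hψ
      apply Center.ext
      apply E.ext
      intro A a
      exact (congrArg Center.Hom.f (hψ ⟨A, a⟩)).trans (hφ a).symm

theorem tot {C : Type u} [Category.{v} C] [Preadditive C]
    [HasFiniteBiproducts C] {J : Type w} [Fintype J] (F : J → C) :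
    ∑ j, biproduct.π F j ≫ biproduct.ι F j = 𝟙 (⨁ F) := by
  classical
  apply biproduct.hom_ext
  intro i
  rw [Preadditive.sum_comp, Finset.sum_eq_single i]
  · simp
  · intro j _ hj
    rw [Category.assoc, biproduct.ι_π_ne _ hj, comp_zero]
  · simp

theorem lift_desc {C : Type u} [Category.{v} C] [Preadditive C]
    [HasFiniteBiproducts C] {J : Type w} [Fintype J] (F : J → C) {X Y : C}
    (g : ∀ j, X ⟶ F j) (h : ∀ j, F j ⟶ Y) :
    biproduct.lift g ≫ biproduct.desc h = ∑ j, g j ≫ h j := by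
  rw [← Category.id_comp (biproduct.desc h), ← tot, Preadditive.sum_comp, Preadditive.comp_sum]
  simp

theorem biprod_iso {C : Type u} [Category.{v} C] [Preadditive C] [MonoidalCategory C]
    [MonoidalPreadditive C] [HasFiniteBiproducts C] {J : Type w} [Fintype J]
    (d : J → C) (F : J → J → C) :
    Nonempty ((⨁ fun i => d i ⊗ ⨁ F i) ≅ ⨁ fun ij : J × J => d ij.1 ⊗ F ij.1 ij.2) := by
  classical
  refine ⟨⟨biproduct.lift fun p => biproduct.π (fun i => d i ⊗ ⨁ F i) p.1 ≫ d p.1 ◁ biproduct.π (F p.1) p.2,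
    biproduct.desc fun p => d p.1 ◁ biproduct.ι (F p.1) p.2 ≫ biproduct.ι (fun i => d i ⊗ ⨁ F i) p.1, ?_, ?_⟩⟩
  · refine (lift_desc (fun ij : J × J => d ij.1 ⊗ F ij.1 ij.2) _ _).trans ?_
    rw [Fintype.sum_prod_type, ← tot]
    refine Finset.sum_congr rfl fun i _ => ?_
    have h : ∑ j, d i ◁ biproduct.π (F i) j ≫ d i ◁ biproduct.ι (F i) j = 𝟙 (d i ⊗ ⨁ F i) := by
      simp only [← MonoidalCategory.whiskerLeft_comp, ← whiskerLeft_sum, tot,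
        MonoidalCategory.whiskerLeft_id]
    calc _ = biproduct.π (fun i => d i ⊗ ⨁ F i) i ≫
          (∑ j, d i ◁ biproduct.π (F i) j ≫ d i ◁ biproduct.ι (F i) j) ≫ biproduct.ι (fun i => d i ⊗ ⨁ F i) i := by
          rw [Preadditive.sum_comp, Preadditive.comp_sum]
          simp only [Category.assoc]
      _ = _ := by rw [h, Category.id_comp]
  · apply biproduct.hom_ext
    rintro ⟨q, q'⟩
    apply biproduct.hom_ext'
    rintro ⟨p, p'⟩
    rw [Category.assoc, biproduct.lift_π, biproduct.ι_desc_assoc, Category.id_comp, Category.assoc]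
    by_cases h : p = q
    · subst h
      rw [biproduct.ι_π_self_assoc, ← MonoidalCategory.whiskerLeft_comp]
      by_cases h' : p' = q'
      · subst h'
        rw [biproduct.ι_π_self, MonoidalCategory.whiskerLeft_id, biproduct.ι_π_self]
      · rw [biproduct.ι_π_ne _ h', biproduct.ι_π_ne _ (by simpa using h'), MonoidalPreadditive.whiskerLeft_zero]
    · rw [biproduct.ι_π_ne_assoc _ h, biproduct.ι_π_ne _ (by simp [h])]
      simp
end CoendPf


open PivotalCat in
/-- Section 12.6: let `C` be a fusion category over `k` with representative set `I` of
simple objects.  Then the pivotal braided category `Z(C)` admits a coend: given the dual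
`M ↦ M* = (M₀*, σ^∨)` on `Z(C)` (hypothesised here via its underlying object and the
components of its half braiding), the functor `(M, N) ↦ M* ⊗ N` on `Z(C)` has a coend
`(C̃, ρ)`, and the underlying object of `C̃` (its image under the forgetful functor
`Z(C) → C`) is isomorphic to `⊕_{i,j ∈ I} i* ⊗ j* ⊗ i ⊗ j`. -/
theorem center_admits_coend (k : Type w) [CommRing k] (C : Type u)
    [Category.{v} C] [Preadditive C] [CategoryTheory.Linear k C] [MonoidalCategory C]
    [MonoidalPreadditive C] [CategoryTheory.MonoidalLinear k C]
    [CategoryTheory.Limits.HasFiniteBiproducts C] [PivotalCat C] [MonoidalKCat k C]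
    [PreFusionCat k C] [FusionCat k C]
    (I : Finset C) (hI : IsRepresentativeSet k C ↑I)
    -- the duality `M ↦ M*` of the pivotal category `Z(C)`:
    (Dual : Center C → Center C)
    (hD : ∀ M : Center C, (Dual M).1 = dual M.1)
    (hDβ : ∀ (M : Center C) (X : C),
      ((Dual M).2.β X).hom =
        (eqToHom (hD M) ▷ X) ≫ dualBeta M.1 X (M.2.β X) ≫ (X ◁ eqToHom (hD M).symm)) :
    ∃ (Cpt : Center C) (ρ : ∀ M : Center C, Dual M ⊗ M ⟶ Cpt),
      -- `ρ` is dinatural (for `f* : (Dual N) ⟶ (Dual M)` the dual morphism in `Z(C)`):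
      (∀ {M N : Center C} (f : M ⟶ N) (g : Dual N ⟶ Dual M),
        g.f = eqToHom (hD N) ≫ pdual f.f ≫ eqToHom (hD M).symm →
        (g ▷ M) ≫ ρ M = (Dual N ◁ f) ≫ ρ N) ∧
      -- `(Cpt, ρ)` is universal among dinatural transformations:
      (∀ (E : Center C) (d : ∀ M : Center C, Dual M ⊗ M ⟶ E),
        (∀ {M N : Center C} (f : M ⟶ N) (g : Dual N ⟶ Dual M),
          g.f = eqToHom (hD N) ≫ pdual f.f ≫ eqToHom (hD M).symm →
          (g ▷ M) ≫ d M = (Dual N ◁ f) ≫ d N) →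
        ∃! φ : Cpt ⟶ E, ∀ M : Center C, ρ M ≫ φ = d M) ∧
      -- the underlying object of the coend is `⊕_{i,j ∈ I} i* ⊗ j* ⊗ i ⊗ j`:
      Nonempty (Cpt.1 ≅
        ⨁ fun ij : ↥I × ↥I => dual ij.1.1 ⊗ (dual ij.2.1 ⊗ (ij.1.1 ⊗ ij.2.1))) := by
  choose r hr using fun X : C => CoendPf.exists_R k hI X
  obtain ⟨E, hE⟩ := CoendPf.exists_E k hI r
  obtain ⟨Cpt, e, he, hu, hC⟩ := CoendPf.exists_center E
  choose p hp1 hp2 using fun M : Center C => CoendPf.exists_pair M (Dual M) (hD M) (hDβ M)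
  let _ (M : Center C) : HasRightDual M := { rightDual := Dual M, exact := p M }
  have mate : ∀ {M N : Center C} (f : M ⟶ N),
      (rightAdjointMate f).f = eqToHom (hD N) ≫ pdual f.f ≫ eqToHom (hD M).symm :=
    fun {M N} f => CoendPf.mate_f f (hD M) (hD N) (hp1 M) (hp2 N)
  have mate' : ∀ {M N : Center C} (f : M ⟶ N) (g : Dual N ⟶ Dual M),
      g.f = eqToHom (hD N) ≫ pdual f.f ≫ eqToHom (hD M).symm → g = rightAdjointMate f :=
    fun f g hg => Center.ext _ _ (hg.trans (mate f).symm)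
  refine ⟨Cpt, fun M => (tensorLeftHomEquiv M M (HasRightDual.rightDual M) Cpt).symm (e M), ?_, ?_, ?_⟩
  · intro M N f g hg
    rw [mate' f g hg]
    refine (CoendPf.nat_iff f _ _).2 ?_
    rw [Equiv.apply_symm_apply, Equiv.apply_symm_apply, he]
  · intro W d hd
    obtain ⟨φ, h1, h2⟩ := hu W (fun M => tensorLeftHomEquiv M M (HasRightDual.rightDual M) W (d M)) (by
      intro M N f
      exact (CoendPf.nat_iff f _ _).1 (hd f (rightAdjointMate f) (mate f)))
    have key : ∀ (ψ : Cpt ⟶ W) (M : Center C),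
        (tensorLeftHomEquiv M M (HasRightDual.rightDual M) Cpt).symm (e M) ≫ ψ = d M ↔
        e M ≫ M ◁ ψ = tensorLeftHomEquiv M M (HasRightDual.rightDual M) W (d M) := by
      intro ψ M
      rw [← (tensorLeftHomEquiv M M (HasRightDual.rightDual M) W).apply_eq_iff_eq,
        tensorLeftHomEquiv_naturality, Equiv.apply_symm_apply]
    exact ⟨φ, fun M => (key φ M).2 (h1 M), fun ψ hψ => h2 ψ fun M => (key ψ M).1 (hψ M)⟩
  · rw [hC, hE]
    simp only [hr]
    exact CoendPf.biprod_iso (fun i : I => dual i.1) (fun i j : I => dual j.1 ⊗ (i.1 ⊗ j.1))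
end

section
/- Let C be a fusion category over a commutative ring k, I a representative set of its simple objects, and T : C → C a k-linear functor. Then T is centralizable: for every object X of C, the functor C^op × C → C, (Y₁,Y₂) ↦ T(Y₁)* ⊗ X ⊗ Y₂, has a coend Z_T(X) = ⊕_{i∈I} T(i)* ⊗ X ⊗ i, whose universal dinatural transformation is ρ_{X,Y} = Σ_β ι_{i_β} ∘ (T(q_Y^β)* ⊗ id_X ⊗ p_Y^β) : T(Y)* ⊗ X ⊗ Y → Z_T(X) for any I-partition (p_Y^β : Y → i_β, q_Y^β : i_β → Y)_β of Y, where ι_i is the inclusion of the summand T(i)* ⊗ X ⊗ i. -/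
open CategoryTheory CategoryTheory.Limits MonoidalCategory

universe v u w

namespace PivotalCat

section Helpers

variable {C : Type u} [Category.{v} C] [MonoidalCategory C] [PivotalCat C]

/-- The left duality as an exact pairing. -/
def pairAux (X : C) : ExactPairing X (dual X) where
  coevaluation' := coevl X
  evaluation' := evl X
  coevaluation_evaluation' := by
    have h := left_zigzag₂ X
    rw [Iso.inv_comp_eq, Category.comp_id] at h
    rw [← h]; simp
  evaluation_coevaluation' := by
    have h := left_zigzag₁ X
    rw [Iso.inv_comp_eq, Category.comp_id] at h
    rw [← h]; simp

/-- The left duality as a right dual in the sense of Mathlib. -/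
def rdAux (X : C) : HasRightDual X :=
  letI := pairAux X
  { rightDual := dual X }

lemma pdual_comp_aux {X Y Z : C} (f : X ⟶ Y) (g : Y ⟶ Z) :
    pdual (f ≫ g) = pdual g ≫ pdual f :=
  letI := rdAux X
  letI := rdAux Y
  letI := rdAux Z
  comp_rightAdjointMate (f := f) (g := g)

lemma pdual_id_aux (X : C) : pdual (𝟙 X) = 𝟙 (dual X) :=
  letI := rdAux X
  rightAdjointMate_id (X := X)

variable [Preadditive C] [MonoidalPreadditive C]

lemma pdual_sum_aux {X Y : C} {ι : Type*} (s : Finset ι) (f : ι → (X ⟶ Y)) :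
    pdual (∑ b ∈ s, f b) = ∑ b ∈ s, pdual (f b) := by
  simp only [pdual, sum_whiskerRight, whiskerLeft_sum, Preadditive.comp_sum, Preadditive.sum_comp]

lemma pdual_zero_aux (X Y : C) : pdual (0 : X ⟶ Y) = 0 := by
  simp [pdual]

lemma pdual_smul_aux (k : Type w) [CommRing k] [CategoryTheory.Linear k C]
    [CategoryTheory.MonoidalLinear k C] {X Y : C} (a : k) (f : X ⟶ Y) :
    pdual (a • f) = a • pdual f := by
  simp [pdual]

end Helpers

end PivotalCat

open PivotalCat in
lemma iota_dinat_aux (k : Type w) [CommRing k] (C : Type u)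
    [Category.{v} C] [Preadditive C] [CategoryTheory.Linear k C] [MonoidalCategory C]
    [MonoidalPreadditive C] [CategoryTheory.MonoidalLinear k C]
    [CategoryTheory.Limits.HasFiniteBiproducts C] [PivotalCat C] [MonoidalKCat k C]
    [PreFusionCat k C]
    (I : Finset C) (hI : IsRepresentativeSet k C ↑I)
    (T : C ⥤ C) [T.Additive] [CategoryTheory.Functor.Linear k T] (X : C)
    (i j : ↥I) (g : i.1 ⟶ j.1) :
    (pdual (T.map g) ▷ (X ⊗ i.1)) ≫
        biproduct.ι (fun i : ↥I => dual (T.obj i.1) ⊗ (X ⊗ i.1)) i =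
      (dual (T.obj j.1) ◁ (X ◁ g)) ≫
        biproduct.ι (fun i : ↥I => dual (T.obj i.1) ⊗ (X ⊗ i.1)) j := by
  by_cases hij : i = j
  · subst hij
    obtain ⟨a, rfl⟩ := (hI.2.1 i.1 i.2).2 g
    simp [pdual_smul_aux, pdual_id_aux]
  · have hg : g = 0 := by
      refine PreFusionCat.simple_hom_zero (k := k) (hI.2.1 i.1 i.2) (hI.2.1 j.1 j.2) ⟨fun e => ?_⟩ g
      obtain ⟨m, -, hm⟩ := hI.2.2 i.1 (hI.2.1 i.1 i.2)
      exact hij (Subtype.ext ((hm i.1 ⟨i.2, ⟨Iso.refl _⟩⟩).trans (hm j.1 ⟨j.2, ⟨e⟩⟩).symm))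
    subst hg
    simp [pdual_zero_aux]

open PivotalCat in
/-- Section 12.2: every `k`-linear endofunctor `T` of a fusion category `C` over `k` is
centralizable: for every object `X`, the functor `(Y₁, Y₂) ↦ T(Y₁)* ⊗ X ⊗ Y₂` has a coend
`Z_T(X) = ⊕_{i ∈ I} T(i)* ⊗ X ⊗ i`, whose universal dinatural transformation is
`ρ_{X,Y} = ∑_β ι_{i_β} ∘ (T(q_Y^β)* ⊗ id_X ⊗ p_Y^β)` for any `I`-partition
`(p_Y^β, q_Y^β)` of `Y`. -/
theorem fusion_functor_centralizable (k : Type w) [CommRing k] (C : Type u)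
    [Category.{v} C] [Preadditive C] [CategoryTheory.Linear k C] [MonoidalCategory C]
    [MonoidalPreadditive C] [CategoryTheory.MonoidalLinear k C]
    [CategoryTheory.Limits.HasFiniteBiproducts C] [PivotalCat C] [MonoidalKCat k C]
    [PreFusionCat k C] [FusionCat k C]
    (I : Finset C) (hI : IsRepresentativeSet k C ↑I)
    (T : C ⥤ C) [T.Additive] [CategoryTheory.Functor.Linear k T]
    -- a choice of `I`-partitions of all objects of `C`:
    (n : C → ℕ) (obj : ∀ Y : C, Fin (n Y) → C)
    (p : ∀ (Y : C) (b : Fin (n Y)), Y ⟶ obj Y b)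
    (q : ∀ (Y : C) (b : Fin (n Y)), obj Y b ⟶ Y)
    (hmem : ∀ Y b, obj Y b ∈ I)
    (hsum : ∀ Y, ∑ b, p Y b ≫ q Y b = 𝟙 Y)
    (hqp : ∀ Y b, q Y b ≫ p Y b = 𝟙 (obj Y b))
    (horth : ∀ Y b b', b ≠ b' → q Y b ≫ p Y b' = 0)
    (X : C) :
    -- the transformation `ρ_{X,-}` to `Z_T(X) = ⊕_{i ∈ I} T(i)* ⊗ X ⊗ i` is dinatural:
    (∀ {Y Y' : C} (f : Y ⟶ Y'),
      (pdual (T.map f) ▷ (X ⊗ Y)) ≫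
          (∑ b, (pdual (T.map (q Y b)) ⊗ₘ (𝟙 X ⊗ₘ p Y b)) ≫
            biproduct.ι (fun i : ↥I => dual (T.obj i.1) ⊗ (X ⊗ i.1)) ⟨obj Y b, hmem Y b⟩) =
        (dual (T.obj Y') ◁ (X ◁ f)) ≫
          (∑ b, (pdual (T.map (q Y' b)) ⊗ₘ (𝟙 X ⊗ₘ p Y' b)) ≫
            biproduct.ι (fun i : ↥I => dual (T.obj i.1) ⊗ (X ⊗ i.1))
              ⟨obj Y' b, hmem Y' b⟩)) ∧
    -- and it is universal among dinatural transformations: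
    ∀ (Z₀ : C) (d : ∀ Y : C, dual (T.obj Y) ⊗ (X ⊗ Y) ⟶ Z₀),
      (∀ {Y Y' : C} (f : Y ⟶ Y'),
        (pdual (T.map f) ▷ (X ⊗ Y)) ≫ d Y = (dual (T.obj Y') ◁ (X ◁ f)) ≫ d Y') →
      ∃! φ : (⨁ fun i : ↥I => dual (T.obj i.1) ⊗ (X ⊗ i.1)) ⟶ Z₀,
        ∀ Y : C,
          (∑ b, (pdual (T.map (q Y b)) ⊗ₘ (𝟙 X ⊗ₘ p Y b)) ≫
              biproduct.ι (fun i : ↥I => dual (T.obj i.1) ⊗ (X ⊗ i.1))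
                ⟨obj Y b, hmem Y b⟩) ≫ φ = d Y := by
  have key := iota_dinat_aux k C I hI T X
  have split : ∀ (Y : C) (b : Fin (n Y)),
      (pdual (T.map (q Y b)) ⊗ₘ (𝟙 X ⊗ₘ p Y b)) =
        (dual (T.obj Y) ◁ (X ◁ p Y b)) ≫ (pdual (T.map (q Y b)) ▷ (X ⊗ obj Y b)) := by
    intro Y b
    rw [tensorHom_def', id_tensorHom]
  have uni : ∀ (Y Z₀ : C) (d : ∀ Y : C, dual (T.obj Y) ⊗ (X ⊗ Y) ⟶ Z₀),
      (∀ b, (pdual (T.map (q Y b)) ▷ (X ⊗ obj Y b)) ≫ d (obj Y b) =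
        (dual (T.obj Y) ◁ (X ◁ q Y b)) ≫ d Y) →
      ∑ b, (pdual (T.map (q Y b)) ⊗ₘ (𝟙 X ⊗ₘ p Y b)) ≫ d (obj Y b) = d Y := by
    intro Y Z₀ d hd
    have h1 : ∀ b, (pdual (T.map (q Y b)) ⊗ₘ (𝟙 X ⊗ₘ p Y b)) ≫ d (obj Y b) =
        (dual (T.obj Y) ◁ (X ◁ (p Y b ≫ q Y b))) ≫ d Y := by
      intro b
      rw [split, Category.assoc, hd b]
      simp
    simp only [h1]
    rw [← Preadditive.sum_comp, ← whiskerLeft_sum, ← whiskerLeft_sum, hsum]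
    simp
  refine ⟨?_, ?_⟩
  · intro Y Y' f
    have hL : ∀ b, pdual (T.map f) ▷ (X ⊗ Y) ≫ (pdual (T.map (q Y b)) ⊗ₘ (𝟙 X ⊗ₘ p Y b)) ≫
        biproduct.ι (fun i : ↥I => dual (T.obj i.1) ⊗ (X ⊗ i.1)) ⟨obj Y b, hmem Y b⟩ =
        ∑ b', (dual (T.obj Y') ◁ (X ◁ p Y b)) ≫
          (pdual (T.map (q Y' b')) ▷ (X ⊗ obj Y b)) ≫
          (dual (T.obj (obj Y' b')) ◁ (X ◁ (q Y b ≫ f ≫ p Y' b'))) ≫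
        biproduct.ι (fun i : ↥I => dual (T.obj i.1) ⊗ (X ⊗ i.1)) ⟨obj Y' b', hmem Y' b'⟩ := by
      intro b
      have e : q Y b ≫ f = ∑ b', (q Y b ≫ f ≫ p Y' b') ≫ q Y' b' := by
        simp only [Category.assoc, ← Preadditive.comp_sum, hsum, Category.comp_id]
      have e2 : pdual (T.map f) ≫ pdual (T.map (q Y b)) =
          ∑ b', pdual (T.map (q Y' b')) ≫ pdual (T.map (q Y b ≫ f ≫ p Y' b')) := by
        rw [← pdual_comp_aux, ← T.map_comp, e, Functor.map_sum, pdual_sum_aux]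
        exact Finset.sum_congr rfl fun b' _ => by rw [T.map_comp, pdual_comp_aux]
      rw [split, Category.assoc, ← whisker_exchange_assoc, ← comp_whiskerRight_assoc, e2,
        sum_whiskerRight, Preadditive.sum_comp, Preadditive.comp_sum]
      refine Finset.sum_congr rfl fun b' _ => ?_
      rw [comp_whiskerRight, Category.assoc,
        key ⟨obj Y b, hmem Y b⟩ ⟨obj Y' b', hmem Y' b'⟩ (q Y b ≫ f ≫ p Y' b')]
    have hR : ∀ b', dual (T.obj Y') ◁ (X ◁ f) ≫
        (pdual (T.map (q Y' b')) ⊗ₘ (𝟙 X ⊗ₘ p Y' b')) ≫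
        biproduct.ι (fun i : ↥I => dual (T.obj i.1) ⊗ (X ⊗ i.1)) ⟨obj Y' b', hmem Y' b'⟩ =
        ∑ b, (dual (T.obj Y') ◁ (X ◁ p Y b)) ≫
          (pdual (T.map (q Y' b')) ▷ (X ⊗ obj Y b)) ≫
          (dual (T.obj (obj Y' b')) ◁ (X ◁ (q Y b ≫ f ≫ p Y' b'))) ≫
        biproduct.ι (fun i : ↥I => dual (T.obj i.1) ⊗ (X ⊗ i.1)) ⟨obj Y' b', hmem Y' b'⟩ := by
      intro b'
      have e : f ≫ p Y' b' = ∑ b, p Y b ≫ (q Y b ≫ f ≫ p Y' b') := by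
        simp only [← Category.assoc, ← Preadditive.sum_comp, hsum, Category.id_comp]
      rw [split, Category.assoc, ← whiskerLeft_comp_assoc, ← whiskerLeft_comp, e,
        whiskerLeft_sum, whiskerLeft_sum, Preadditive.sum_comp]
      refine Finset.sum_congr rfl fun b _ => ?_
      rw [← e, whiskerLeft_comp, whiskerLeft_comp, Category.assoc, whisker_exchange_assoc]
    rw [Preadditive.comp_sum, Preadditive.comp_sum, Finset.sum_congr rfl fun b _ => hL b,
      Finset.sum_congr rfl fun b _ => hR b, Finset.sum_comm]
  · intro Z₀ d hd
    refine ⟨biproduct.desc fun i => d i.1, ?_, ?_⟩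
    · intro Y
      rw [Preadditive.sum_comp]
      simp only [Category.assoc, biproduct.ι_desc]
      exact uni Y Z₀ d fun b => hd (q Y b)
    · intro φ hφ
      refine biproduct.hom_ext' _ _ fun i => ?_
      rw [biproduct.ι_desc, ← hφ i.1]
      congr 1
      have h1 : ∀ b, (pdual (T.map (q i.1 b)) ⊗ₘ (𝟙 X ⊗ₘ p i.1 b)) ≫
          biproduct.ι (fun i : ↥I => dual (T.obj i.1) ⊗ (X ⊗ i.1))
            ⟨obj i.1 b, hmem i.1 b⟩ =
          (dual (T.obj i.1) ◁ (X ◁ (p i.1 b ≫ q i.1 b))) ≫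
            biproduct.ι (fun i : ↥I => dual (T.obj i.1) ⊗ (X ⊗ i.1)) i := by
        intro b
        rw [split, Category.assoc, key ⟨obj i.1 b, hmem i.1 b⟩ i (q i.1 b)]
        simp
      rw [Finset.sum_congr rfl fun b _ => h1 b, ← Preadditive.sum_comp, ← whiskerLeft_sum,
        ← whiskerLeft_sum, hsum]
      simp
end

section
/- Let C be a fusion category over a commutative ring k with representative set I of simple objects, let D be a category whose hom-sets are k-modules with k-bilinear composition and which admits finite direct sums, and let F : C^op × C → D be a functor that is k-linear in each variable. Then F has a coend, namely C₀ = ⊕_{i∈I} F(i,i) together with the dinatural transformation ρ_X = Σ_{α∈Λ} ι_{i_α} ∘ F(q_X^α, p_X^α) : F(X,X) → C₀, for any I-partition (p_X^α : X → i_α, q_X^α : i_α → X)_{α∈Λ} of X, where ι_i is the inclusion of the summand F(i,i); moreover, any dinatural transformation d from F to an object D₀ factors through ρ via the unique morphism C₀ → D₀ whose restriction to the summand F(i,i) is d_i. -/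
open CategoryTheory CategoryTheory.Limits MonoidalCategory

universe v u w

open Opposite in
/-- Coends of bilinear functors on a fusion category (Section 12.1): let `C` be a fusion
category over `k` with representative set `I` of simple objects, `D` a `k`-linear category
admitting finite direct sums, and `F : Cᵒᵖ × C ⥤ D` a functor `k`-linear in each variable.
Then `F` has a coend, namely `C₀ = ⊕_{i ∈ I} F(i,i)` together with the dinatural
transformation `ρ_X = ∑_α ι_{i_α} ∘ F(q_X^α, p_X^α)` (for any choice of `I`-partitions
`(p_X^α, q_X^α)` of the objects `X`); moreover any dinatural transformation `d` from `F`
to an object `D₀` factors through `ρ` via the unique morphism `C₀ ⟶ D₀` whose restriction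
to the summand `F(i,i)` is `d_i`. -/
theorem fusion_coend_of_bilinear_functor (k : Type w) [CommRing k] (C : Type u)
    [Category.{v} C] [Preadditive C] [CategoryTheory.Linear k C] [MonoidalCategory C]
    [MonoidalPreadditive C] [CategoryTheory.MonoidalLinear k C]
    [CategoryTheory.Limits.HasFiniteBiproducts C] [PivotalCat C] [MonoidalKCat k C]
    [PreFusionCat k C] [FusionCat k C]
    (I : Finset C) (hI : IsRepresentativeSet k C ↑I)
    (D : Type*) [Category D] [Preadditive D] [CategoryTheory.Linear k D]
    [CategoryTheory.Limits.HasFiniteBiproducts D]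
    (F : Cᵒᵖ × C ⥤ D)
    -- `F` is `k`-linear in the second variable:
    (hF₂ : ∀ (X : C) {Y Y' : C} (c : k) (g g' : Y ⟶ Y'),
      F.map ((𝟙 (op X), c • g + g') : (op X, Y) ⟶ (op X, Y')) =
        c • F.map ((𝟙 (op X), g) : (op X, Y) ⟶ (op X, Y')) +
          F.map ((𝟙 (op X), g') : (op X, Y) ⟶ (op X, Y')))
    -- `F` is `k`-linear in the first variable:
    (hF₁ : ∀ {X X' : C} (Y : C) (c : k) (f f' : X ⟶ X'),
      F.map (((c • f + f').op, 𝟙 Y) : (op X', Y) ⟶ (op X, Y)) =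
        c • F.map ((f.op, 𝟙 Y) : (op X', Y) ⟶ (op X, Y)) +
          F.map ((f'.op, 𝟙 Y) : (op X', Y) ⟶ (op X, Y)))
    -- a choice of `I`-partitions of all objects of `C`:
    (n : C → ℕ) (obj : ∀ X : C, Fin (n X) → C)
    (p : ∀ (X : C) (a : Fin (n X)), X ⟶ obj X a)
    (q : ∀ (X : C) (a : Fin (n X)), obj X a ⟶ X)
    (hmem : ∀ X a, obj X a ∈ I)
    (hsum : ∀ X, ∑ a, p X a ≫ q X a = 𝟙 X)
    (hqp : ∀ X a, q X a ≫ p X a = 𝟙 (obj X a))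
    (horth : ∀ X a b, a ≠ b → q X a ≫ p X b = 0) :
    -- the associated dinatural transformation `ρ` to `⊕_{i ∈ I} F(i,i)` is dinatural:
    (∀ {X Y : C} (f : X ⟶ Y),
      F.map ((f.op, 𝟙 X) : (op Y, X) ⟶ (op X, X)) ≫
          (∑ a, F.map (((q X a).op, p X a) : (op X, X) ⟶ (op (obj X a), obj X a)) ≫
            biproduct.ι (fun i : ↥I => F.obj (op i.1, i.1)) ⟨obj X a, hmem X a⟩) =
        F.map ((𝟙 (op Y), f) : (op Y, X) ⟶ (op Y, Y)) ≫
          (∑ a, F.map (((q Y a).op, p Y a) : (op Y, Y) ⟶ (op (obj Y a), obj Y a)) ≫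
            biproduct.ι (fun i : ↥I => F.obj (op i.1, i.1)) ⟨obj Y a, hmem Y a⟩)) ∧
    -- and it is a coend: every dinatural transformation `d` factors uniquely through it,
    -- via the morphism whose restriction to the summand `F(i,i)` is `d_i`:
    ∀ (D₀ : D) (d : ∀ X : C, F.obj (op X, X) ⟶ D₀),
      (∀ {X Y : C} (f : X ⟶ Y),
        F.map ((f.op, 𝟙 X) : (op Y, X) ⟶ (op X, X)) ≫ d X =
          F.map ((𝟙 (op Y), f) : (op Y, X) ⟶ (op Y, Y)) ≫ d Y) →
      (∀ X : C,
        (∑ a, F.map (((q X a).op, p X a) : (op X, X) ⟶ (op (obj X a), obj X a)) ≫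
            biproduct.ι (fun i : ↥I => F.obj (op i.1, i.1)) ⟨obj X a, hmem X a⟩) ≫
          biproduct.desc (fun i : ↥I => d i.1) = d X) ∧
      ∀ φ : (⨁ fun i : ↥I => F.obj (op i.1, i.1)) ⟶ D₀,
        (∀ X : C,
          (∑ a, F.map (((q X a).op, p X a) : (op X, X) ⟶ (op (obj X a), obj X a)) ≫
              biproduct.ι (fun i : ↥I => F.obj (op i.1, i.1)) ⟨obj X a, hmem X a⟩) ≫ φ =
            d X) →
        φ = biproduct.desc (fun i : ↥I => d i.1) := by
  have hz₂ : ∀ (X : C) {Y Y' : C},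
      F.map ((𝟙 (op X), (0 : Y ⟶ Y')) : (op X, Y) ⟶ (op X, Y')) = 0 := by
    intro X Y Y'
    have h := hF₂ X (Y := Y) (Y' := Y') 1 0 0
    rw [smul_zero, add_zero, one_smul] at h
    exact left_eq_add.mp h
  have hz₁ : ∀ {X X' : C} (Y : C),
      F.map (((0 : X ⟶ X').op, 𝟙 Y) : (op X', Y) ⟶ (op X, Y)) = 0 := by
    intro X X' Y
    have h := hF₁ (X := X) (X' := X') Y 1 0 0
    rw [smul_zero, add_zero, one_smul] at h
    exact left_eq_add.mp h
  have hs₂ : ∀ (X : C) {Y Y' : C} (m : ℕ) (g : Fin m → (Y ⟶ Y')),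
      F.map ((𝟙 (op X), ∑ a, g a) : (op X, Y) ⟶ (op X, Y')) =
        ∑ a, F.map ((𝟙 (op X), g a) : (op X, Y) ⟶ (op X, Y')) := by
    intro X Y Y' m g
    let T : (Y ⟶ Y') →+ (F.obj (op X, Y) ⟶ F.obj (op X, Y')) :=
      { toFun := fun h => F.map ((𝟙 (op X), h) : (op X, Y) ⟶ (op X, Y'))
        map_zero' := hz₂ X
        map_add' := fun x y => by
          have h := hF₂ X 1 x y
          rw [one_smul, one_smul] at h
          exact h }
    exact map_sum T g Finset.univ
  have hs₁ : ∀ {X X' : C} (Y : C) (m : ℕ) (g : Fin m → (X ⟶ X')),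
      F.map (((∑ a, g a).op, 𝟙 Y) : (op X', Y) ⟶ (op X, Y)) =
        ∑ a, F.map (((g a).op, 𝟙 Y) : (op X', Y) ⟶ (op X, Y)) := by
    intro X X' Y m g
    let T : (X ⟶ X') →+ (F.obj (op X', Y) ⟶ F.obj (op X, Y)) :=
      { toFun := fun h => F.map ((h.op, 𝟙 Y) : (op X', Y) ⟶ (op X, Y))
        map_zero' := hz₁ Y
        map_add' := fun x y => by
          have h := hF₁ Y 1 x y
          rw [one_smul, one_smul] at h
          exact h }
    exact map_sum T g Finset.univ
  -- functoriality bookkeeping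
  have c₂ : ∀ (X : C) {Y Y' Y'' : C} (g : Y ⟶ Y') (h : Y' ⟶ Y''),
      F.map ((𝟙 (op X), g ≫ h) : (op X, Y) ⟶ (op X, Y'')) =
        F.map ((𝟙 (op X), g) : (op X, Y) ⟶ (op X, Y')) ≫
          F.map ((𝟙 (op X), h) : (op X, Y') ⟶ (op X, Y'')) := by
    intro X Y Y' Y'' g h
    rw [← F.map_comp, prod_comp, Category.comp_id]
  have c₁ : ∀ {X X' X'' : C} (Y : C) (g : X ⟶ X') (h : X' ⟶ X''),
      F.map (((g ≫ h).op, 𝟙 Y) : (op X'', Y) ⟶ (op X, Y)) =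
        F.map ((h.op, 𝟙 Y) : (op X'', Y) ⟶ (op X', Y)) ≫
          F.map ((g.op, 𝟙 Y) : (op X', Y) ⟶ (op X, Y)) := by
    intro X X' X'' Y g h
    rw [← F.map_comp, prod_comp, Category.comp_id, op_comp]
  have c₂₁ : ∀ {X X' Y Y' : C} (g : X ⟶ X') (h : Y ⟶ Y'),
      F.map ((g.op, h) : (op X', Y) ⟶ (op X, Y')) =
        F.map ((𝟙 (op X'), h) : (op X', Y) ⟶ (op X', Y')) ≫
          F.map ((g.op, 𝟙 Y') : (op X', Y') ⟶ (op X, Y')) := by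
    intro X X' Y Y' g h
    rw [← F.map_comp, prod_comp, Category.comp_id, Category.id_comp]
  have c₁₂ : ∀ {X X' Y Y' : C} (g : X ⟶ X') (h : Y ⟶ Y'),
      F.map ((g.op, h) : (op X', Y) ⟶ (op X, Y')) =
        F.map ((g.op, 𝟙 Y) : (op X', Y) ⟶ (op X, Y)) ≫
          F.map ((𝟙 (op X), h) : (op X, Y) ⟶ (op X, Y')) := by
    intro X X' Y Y' g h
    rw [← F.map_comp, prod_comp, Category.comp_id, Category.id_comp]
  have cid : ∀ (X Y : C), F.map ((𝟙 (op X), 𝟙 Y) : (op X, Y) ⟶ (op X, Y)) = 𝟙 _ := by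
    intro X Y
    exact F.map_id (op X, Y)
  -- dinaturality of the inclusions on the simple objects
  have key : ∀ (i j : ↥I) (g : i.1 ⟶ j.1),
      F.map ((g.op, 𝟙 i.1) : (op j.1, i.1) ⟶ (op i.1, i.1)) ≫
          biproduct.ι (fun i : ↥I => F.obj (op i.1, i.1)) i =
        F.map ((𝟙 (op j.1), g) : (op j.1, i.1) ⟶ (op j.1, j.1)) ≫
          biproduct.ι (fun i : ↥I => F.obj (op i.1, i.1)) j := by
    intro i j g
    by_cases hij : i = j
    · subst hij
      obtain ⟨c, rfl⟩ := (hI.2.1 i.1 i.2).2 g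
      have h1 := hF₁ i.1 c (𝟙 i.1) 0
      have h2 := hF₂ i.1 c (𝟙 i.1) 0
      rw [hz₁, add_zero, add_zero] at h1
      rw [hz₂, add_zero, add_zero] at h2
      dsimp only
      rw [h1, h2, op_id]
    · have hg : g = 0 := by
        refine PreFusionCat.simple_hom_zero (k := k) (hI.2.1 i.1 i.2) (hI.2.1 j.1 j.2)
          ⟨fun e => hij ?_⟩ g
        exact Subtype.ext ((hI.2.2 i.1 (hI.2.1 i.1 i.2)).unique
          ⟨i.2, ⟨Iso.refl _⟩⟩ ⟨j.2, ⟨e⟩⟩)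
      subst hg
      rw [hz₁, hz₂, zero_comp, zero_comp]
  refine ⟨?_, ?_⟩
  · intro X Y f
    rw [Preadditive.comp_sum, Preadditive.comp_sum]
    have hL : ∀ a, F.map ((f.op, 𝟙 X) : (op Y, X) ⟶ (op X, X)) ≫
        F.map (((q X a).op, p X a) : (op X, X) ⟶ (op (obj X a), obj X a)) ≫
            biproduct.ι (fun i : ↥I => F.obj (op i.1, i.1)) ⟨obj X a, hmem X a⟩ =
        ∑ b, F.map (((q Y b).op, p X a) : (op Y, X) ⟶ (op (obj Y b), obj X a)) ≫
          F.map (((q X a ≫ f ≫ p Y b).op, 𝟙 _) :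
            (op (obj Y b), obj X a) ⟶ (op (obj X a), obj X a)) ≫
          biproduct.ι (fun i : ↥I => F.obj (op i.1, i.1)) ⟨obj X a, hmem X a⟩ := by
      intro a
      have e : q X a ≫ f = ∑ b, (q X a ≫ f ≫ p Y b) ≫ q Y b := by
        simp only [Category.assoc]
        rw [← Preadditive.comp_sum, ← Preadditive.comp_sum, hsum, Category.comp_id]
      have e2 : F.map ((f.op, 𝟙 X) : (op Y, X) ⟶ (op X, X)) ≫
          F.map (((q X a).op, p X a) : (op X, X) ⟶ (op (obj X a), obj X a)) =
          F.map ((𝟙 (op Y), p X a) : (op Y, X) ⟶ (op Y, obj X a)) ≫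
          F.map (((q X a ≫ f).op, 𝟙 _) : (op Y, obj X a) ⟶ (op (obj X a), obj X a)) := by
        rw [← c₂₁, ← F.map_comp, prod_comp, Category.id_comp, op_comp]
      rw [← Category.assoc, e2, e, hs₁, Preadditive.comp_sum, Preadditive.sum_comp]
      refine Finset.sum_congr rfl fun b _ => ?_
      rw [c₁, c₂₁ (q Y b) (p X a)]
      simp only [Category.assoc]
    have hR : ∀ b, F.map ((𝟙 (op Y), f) : (op Y, X) ⟶ (op Y, Y)) ≫
        F.map (((q Y b).op, p Y b) : (op Y, Y) ⟶ (op (obj Y b), obj Y b)) ≫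
            biproduct.ι (fun i : ↥I => F.obj (op i.1, i.1)) ⟨obj Y b, hmem Y b⟩ =
        ∑ a, F.map (((q Y b).op, p X a) : (op Y, X) ⟶ (op (obj Y b), obj X a)) ≫
          F.map ((𝟙 _, q X a ≫ f ≫ p Y b) :
            (op (obj Y b), obj X a) ⟶ (op (obj Y b), obj Y b)) ≫
          biproduct.ι (fun i : ↥I => F.obj (op i.1, i.1)) ⟨obj Y b, hmem Y b⟩ := by
      intro b
      have e : f ≫ p Y b = ∑ a, p X a ≫ (q X a ≫ f ≫ p Y b) := by
        simp only [← Category.assoc]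
        rw [← Preadditive.sum_comp, ← Preadditive.sum_comp, hsum, Category.id_comp]
      have e2 : F.map ((𝟙 (op Y), f) : (op Y, X) ⟶ (op Y, Y)) ≫
          F.map (((q Y b).op, p Y b) : (op Y, Y) ⟶ (op (obj Y b), obj Y b)) =
          F.map (((q Y b).op, 𝟙 X) : (op Y, X) ⟶ (op (obj Y b), X)) ≫
          F.map ((𝟙 _, f ≫ p Y b) : (op (obj Y b), X) ⟶ (op (obj Y b), obj Y b)) := by
        rw [← c₁₂, ← F.map_comp, prod_comp, Category.id_comp]
      rw [← Category.assoc, e2, e, hs₂, Preadditive.comp_sum, Preadditive.sum_comp]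
      refine Finset.sum_congr rfl fun a _ => ?_
      rw [← e, c₂, c₁₂ (q Y b) (p X a)]
      simp only [Category.assoc]
    rw [Finset.sum_congr rfl fun a _ => hL a, Finset.sum_congr rfl fun b _ => hR b,
      Finset.sum_comm]
    refine Finset.sum_congr rfl fun b _ => Finset.sum_congr rfl fun a _ => ?_
    congr 1
    exact key ⟨obj X a, hmem X a⟩ ⟨obj Y b, hmem Y b⟩ (q X a ≫ f ≫ p Y b)
  · intro D₀ d hd
    refine ⟨?_, ?_⟩
    · intro X
      rw [Preadditive.sum_comp]
      have h : ∀ a, (F.map (((q X a).op, p X a) : (op X, X) ⟶ (op (obj X a), obj X a)) ≫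
            biproduct.ι (fun i : ↥I => F.obj (op i.1, i.1)) ⟨obj X a, hmem X a⟩) ≫
          biproduct.desc (fun i : ↥I => d i.1) =
          F.map ((𝟙 (op X), p X a ≫ q X a) : (op X, X) ⟶ (op X, X)) ≫ d X := by
        intro a
        rw [Category.assoc, biproduct.ι_desc, c₂₁, c₂, Category.assoc, Category.assoc]
        congr 1
        exact hd (q X a)
      rw [Finset.sum_congr rfl fun a _ => h a, ← Preadditive.sum_comp, ← hs₂, hsum, cid,
        Category.id_comp]
    · intro φ hφ
      refine biproduct.hom_ext' _ _ fun i => ?_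
      rw [biproduct.ι_desc, ← hφ i.1]
      congr 1
      have h : ∀ a, F.map (((q i.1 a).op, p i.1 a) :
            (op i.1, i.1) ⟶ (op (obj i.1 a), obj i.1 a)) ≫
            biproduct.ι (fun i : ↥I => F.obj (op i.1, i.1)) ⟨obj i.1 a, hmem i.1 a⟩ =
          F.map ((𝟙 (op i.1), p i.1 a ≫ q i.1 a) : (op i.1, i.1) ⟶ (op i.1, i.1)) ≫
            biproduct.ι (fun i : ↥I => F.obj (op i.1, i.1)) i := by
        intro a
        rw [c₂₁, c₂, Category.assoc, Category.assoc]
        congr 1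
        exact key ⟨obj i.1 a, hmem i.1 a⟩ i (q i.1 a)
      rw [Finset.sum_congr rfl fun a _ => h a, ← Preadditive.sum_comp, ← hs₂, hsum, cid,
        Category.id_comp]
end
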